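/- arXiv:2204.03136 — 10 statements merged into one kernel-verified Lean document; each statement's English description precedes it below -/
import Mathlib

section
/- If a simplicial complex Δ is a quasi-forest, then for every subset W of the vertex set of Δ, the induced subcomplex Δ_W is a quasi-forest. -/
/-!
STATEMENT 0: If a simplicial complex Δ is a quasi-forest, then for every subset W of the
vertex set of Δ, the induced subcomplex Δ_W is a quasi-forest.

We represent an abstract simplicial complex by its set of faces `K : Set (Finset V)`
(a collection of finite subsets of `V`), together with the downward-closedness hypothesis.
-/

variable {V : Type*} [DecidableEq V]

/-- `F` is a facet (maximal face) of the complex with face set `K`. -/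
def IsFacet (K : Set (Finset V)) (F : Finset V) : Prop :=
  F ∈ K ∧ ∀ G ∈ K, F ⊆ G → F = G

/-- `F` is a leaf of the complex with face set `K`: either `F` is the only facet, or there
is a facet `G ≠ F` such that `F ∩ H ⊆ G` for every facet `H ≠ F`. -/
def IsLeaf (K : Set (Finset V)) (F : Finset V) : Prop :=
  IsFacet K F ∧
    ((∀ H, IsFacet K H → H = F) ∨
      ∃ G, IsFacet K G ∧ G ≠ F ∧ ∀ H, IsFacet K H → H ≠ F → F ∩ H ⊆ G)

/-- The simplicial complex `⟨F 0, …, F i⟩` generated by the sets `F j` for `j ≤ i`: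
its faces are the subsets of the `F j`, `j ≤ i`. -/
def genUpTo {t : ℕ} (F : Fin t → Finset V) (i : Fin t) : Set (Finset V) :=
  {σ | ∃ j, j ≤ i ∧ σ ⊆ F j}

/-- A complex is a quasi-forest if its facets can be enumerated (without repetition) as
`F 0, …, F (t-1)`, every face lies in some facet, and for each `i` the facet `F i` is a
leaf of the subcomplex `⟨F 0, …, F i⟩`. -/
def IsQuasiForest (K : Set (Finset V)) : Prop :=
  ∃ (t : ℕ) (F : Fin t → Finset V),
    Function.Injective F ∧
    (∀ σ, IsFacet K σ ↔ ∃ i, σ = F i) ∧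
    (∀ σ ∈ K, ∃ i, σ ⊆ F i) ∧
    ∀ i : Fin t, IsLeaf (genUpTo F i) (F i)

/-!
The leaf condition only says that all traces `F i ∩ F k`, `k < i`, lie in a single earlier `F j`.
This running intersection property survives restriction of every set to `W`, but the restricted
facets `F i ∩ W` need not be incomparable. If `A ⊂ B` are both present, then `A` can be deleted
without changing the complex: wherever `A` served to contain traces, `B` or another superset of
`A` takes over. The only obstruction is a `B` that comes after `A` and is attached along `A`
itself; then `B` is moved to the place of `A`. Deleting until the family is an antichain gives a
leaf order of the facets of the induced subcomplex.
-/

theorem lowerClosure_coe_erase_of_lt {α : Type*} [Preorder α] [DecidableEq α] {S : Finset α}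
    {a b : α} (hb : b ∈ S) (hab : a < b) :
    lowerClosure (S.erase a : Set α) = lowerClosure (S : Set α) := by
  refine (lowerClosure_mono (Finset.coe_subset.2 (S.erase_subset a))).antisymm ?_
  refine lowerClosure_le.2 fun x hx => mem_lowerClosure.2 ?_
  rcases eq_or_ne x a with rfl | hxa
  · exact ⟨b, Finset.mem_erase.2 ⟨hab.ne', hb⟩, hab.le⟩
  · exact ⟨x, Finset.mem_erase.2 ⟨hxa, hx⟩, le_rfl⟩

section RunningIntersection

variable {α : Type*} [SemilatticeInf α]

/-- The condition on a new member `a` of a family in which `S` is the set of earlier members: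
unless there are none, some `b ∈ S` contains every trace `a ⊓ c` of an element `c` of `S` on `a`.
For facets of a complex this says that `a` is a leaf. -/
def IsLeafOver (a : α) (S : Set α) : Prop :=
  S.Nonempty → ∃ b ∈ S, ∀ c ∈ S, a ⊓ c ≤ b

theorem IsLeafOver.sdiff_singleton {a b e : α} {S : Set α} (he : IsLeafOver e S) (hb : b ∈ S)
    (hab : a < b) : IsLeafOver e (S \ {a}) := by
  rintro -
  obtain ⟨c, hc, hec⟩ := he ⟨b, hb⟩
  obtain ⟨d, hd, hcd⟩ : ∃ d ∈ S \ {a}, c ≤ d := by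
    rcases eq_or_ne c a with rfl | hca
    · exact ⟨b, ⟨hb, hab.ne'⟩, hab.le⟩
    · exact ⟨c, ⟨hc, hca⟩, le_rfl⟩
  exact ⟨d, hd, fun x hx => (hec x hx.1).trans hcd⟩

theorem forall_isLeafOver_snoc_iff {n : ℕ} {F : Fin n → α} {a : α} :
    (∀ i, IsLeafOver (Fin.snoc (α := fun _ => α) F a i)
      (Fin.snoc (α := fun _ => α) F a '' Set.Iio i)) ↔
      (∀ i, IsLeafOver (F i) (F '' Set.Iio i)) ∧ IsLeafOver a (Set.range F) := by
  have himage (s : Set (Fin n)) :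
      Fin.snoc (α := fun _ => α) F a '' (Fin.castSucc '' s) = F '' s := by
    rw [← Set.image_comp, Fin.snoc_comp_castSucc]
  have himage_last : Fin.snoc (α := fun _ => α) F a '' Set.Iio (Fin.last n) = Set.range F := by
    have hIio_last : Set.Iio (Fin.last n) = Fin.castSucc '' Set.univ := by
      rw [Set.image_univ, Fin.range_castSucc]
      rfl
    rw [hIio_last, himage, Set.image_univ]
  simp only [Fin.forall_fin_succ', Fin.snoc_castSucc, Fin.snoc_last, ← Fin.image_castSucc_Iio,
    himage, himage_last]

variable [DecidableEq α]

/-- A finite family has the running intersection property if it can be built up by successively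
adding members that are leaves over the earlier ones. Unlike in a quasi-forest, members may be
comparable; `insert_leaf` with `a ∈ S` leaves the family unchanged. -/
inductive HasRunningIntersection : Finset α → Prop
  | empty : HasRunningIntersection ∅
  | insert_leaf {a : α} {S : Finset α} (hS : HasRunningIntersection S)
      (ha : IsLeafOver a (S : Set α)) : HasRunningIntersection (insert a S)

namespace HasRunningIntersection

theorem image {β : Type*} [SemilatticeInf β] [DecidableEq β] {S : Finset α} {f : α → β}
    (hS : HasRunningIntersection S)
    (hf : ∀ a ∈ S, ∀ b ∈ S, ∀ c ∈ S, a ≠ b → a ⊓ b ≤ c → f a ⊓ f b ≤ f c) :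
    HasRunningIntersection (S.image f) := by
  induction hS with
  | empty => exact .empty
  | @insert_leaf a S _ ha ih =>
    have hfS := ih fun b hb c hc d hd =>
      hf b (Finset.mem_insert_of_mem hb) c (Finset.mem_insert_of_mem hc) d
        (Finset.mem_insert_of_mem hd)
    by_cases haS : a ∈ S
    · rwa [Finset.insert_eq_of_mem haS]
    rw [Finset.image_insert]
    refine hfS.insert_leaf fun hne => ?_
    rw [Finset.coe_image] at hne ⊢
    obtain ⟨b, hb, hab⟩ := ha hne.of_image
    refine ⟨f b, Set.mem_image_of_mem f hb, Set.forall_mem_image.2 fun c hc => ?_⟩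
    exact hf a (Finset.mem_insert_self a S) c (Finset.mem_insert_of_mem hc) b
      (Finset.mem_insert_of_mem hb) (fun hac => haS (hac ▸ hc)) (hab c hc)

theorem insert_erase_of_le {S : Finset α} {a e : α} (hS : HasRunningIntersection S) (ha : a ∈ S)
    (hae : a ≤ e) (he : ∀ c ∈ S, e ⊓ c ≤ a) : HasRunningIntersection (insert e (S.erase a)) := by
  let f : α → α := Function.update id a e
  have hfa : f a = e := Function.update_self ..
  have hf_ne : ∀ {x}, x ≠ a → f x = x := fun hx => Function.update_of_ne hx e id
  have le_f : ∀ x, x ≤ f x := fun x => by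
    rcases eq_or_ne x a with rfl | hx
    · rwa [hfa]
    · rw [hf_ne hx]
  have f_inf_f_le : ∀ x ∈ S, ∀ y ∈ S, x ≠ y → f x ⊓ f y ≤ x ⊓ y := by
    intro x hx y hy hxy
    rcases eq_or_ne x a with rfl | hxa
    · rw [hfa, hf_ne hxy.symm]
      exact le_inf (he y hy) inf_le_right
    rcases eq_or_ne y a with rfl | hya
    · rw [hfa, hf_ne hxy, inf_comm]
      exact le_inf inf_le_right (he x hx)
    · rw [hf_ne hxa, hf_ne hya]
  have himage : S.image f = insert e (S.erase a) := by
    conv_lhs => rw [← Finset.insert_erase ha, Finset.image_insert, hfa]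
    congr 1
    exact (Finset.image_congr fun x hx => hf_ne (Finset.ne_of_mem_erase hx)).trans Finset.image_id
  rw [← himage]
  exact hS.image fun x hx y hy z _ hxy hxyz =>
    ((f_inf_f_le x hx y hy hxy).trans hxyz).trans (le_f z)

theorem erase_of_lt {S : Finset α} {a b : α} (hS : HasRunningIntersection S) (hb : b ∈ S)
    (hab : a < b) : HasRunningIntersection (S.erase a) := by
  induction hS generalizing b with
  | empty => simp at hb
  | @insert_leaf e S hS he ih =>
    have insert_erase : ∀ {x}, x ∈ S → a < x → HasRunningIntersection (insert e (S.erase a)) :=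
      fun hx hax => (ih hx hax).insert_leaf (by
        rw [Finset.coe_erase]
        exact he.sdiff_singleton hx hax)
    rcases eq_or_ne a e with rfl | hae
    · rw [Finset.erase_insert_eq_erase]
      exact ih (Finset.mem_of_mem_insert_of_ne hb hab.ne') hab
    by_cases haS : a ∈ S
    swap
    · rw [Finset.erase_eq_of_notMem (Finset.mem_insert.not.2 (not_or.2 ⟨hae, haS⟩))]
      exact hS.insert_leaf he
    rw [Finset.erase_insert_of_ne hae.symm]
    rcases Finset.mem_insert.1 hb with rfl | hbS
    · obtain ⟨c, hc, hbc⟩ := he ⟨a, haS⟩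
      have hac : a ≤ c := (le_inf hab.le le_rfl).trans (hbc a haS)
      rcases hac.eq_or_lt with rfl | hac
      · exact hS.insert_erase_of_le haS hab.le hbc
      · exact insert_erase hc hac
    · exact insert_erase hbS hab

theorem exists_isAntichain {S : Finset α} (hS : HasRunningIntersection S) :
    ∃ T : Finset α, HasRunningIntersection T ∧ IsAntichain (· ≤ ·) (T : Set α) ∧
      lowerClosure (T : Set α) = lowerClosure (S : Set α) := by
  induction S using Finset.strongInduction with
  | H S ih =>
    by_cases hanti : IsAntichain (· ≤ ·) (S : Set α)
    · exact ⟨S, hS, hanti, rfl⟩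
    simp only [isAntichain_iff_forall_not_lt, not_forall, not_not] at hanti
    obtain ⟨a, ha, b, hb, hab⟩ := hanti
    obtain ⟨T, hT, hTanti, hTS⟩ := ih _ (Finset.erase_ssubset ha) (hS.erase_of_lt hb hab)
    exact ⟨T, hT, hTanti, hTS.trans (lowerClosure_coe_erase_of_lt hb hab)⟩

theorem exists_enumeration {S : Finset α} (hS : HasRunningIntersection S) :
    ∃ (n : ℕ) (F : Fin n → α), Function.Injective F ∧ Set.range F = S ∧
      ∀ i, IsLeafOver (F i) (F '' Set.Iio i) := by
  induction hS with
  | empty => exact ⟨0, Fin.elim0, fun i => i.elim0, by simp, fun i => i.elim0⟩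
  | @insert_leaf a S _ ha ih =>
    obtain ⟨n, F, hinj, hrange, hleaf⟩ := ih
    by_cases haS : a ∈ S
    · exact ⟨n, F, hinj, by rwa [Finset.insert_eq_of_mem haS], hleaf⟩
    refine ⟨n + 1, Fin.snoc F a, Fin.snoc_injective_iff.2 ⟨hinj, by rwa [hrange]⟩, ?_, ?_⟩
    · rw [Fin.range_snoc, hrange, Finset.coe_insert]
    · exact forall_isLeafOver_snoc_iff.2 ⟨hleaf, by rwa [hrange]⟩

theorem of_enumeration {n : ℕ} {F : Fin n → α} (hF : ∀ i, IsLeafOver (F i) (F '' Set.Iio i)) :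
    HasRunningIntersection (Finset.univ.image F) := by
  induction F using Fin.snocInduction with
  | elim0 => exact .empty
  | @snoc n F a ih =>
    obtain ⟨hinit, hlast⟩ := forall_isLeafOver_snoc_iff.1 hF
    have hrange : Finset.univ.image (Fin.snoc (α := fun _ => α) F a) =
        insert a (Finset.univ.image F) := by
      rw [← Finset.coe_inj]
      push_cast
      simp only [Set.image_univ, Fin.range_snoc]
    rw [hrange]
    exact (ih hinit).insert_leaf (by simpa using hlast)

end HasRunningIntersection

end RunningIntersection

section Facets

variable {U : Type*}

theorem isFacet_iff_maximal {K : Set (Finset U)} {σ : Finset U} :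
    IsFacet K σ ↔ Maximal (· ∈ K) σ :=
  and_congr_right fun _ => forall₂_congr fun _ _ =>
    ⟨fun h hle => (h hle).ge, fun h hle => hle.antisymm (h hle)⟩

theorem isFacet_lowerClosure_iff {S : Set (Finset U)} (hS : IsAntichain (· ≤ ·) S)
    {σ : Finset U} : IsFacet (lowerClosure S : Set (Finset U)) σ ↔ σ ∈ S :=
  isFacet_iff_maximal.trans hS.maximal_mem_lowerClosure_iff_mem

theorem genUpTo_eq_lowerClosure {n : ℕ} (F : Fin n → Finset U) (i : Fin n) :
    genUpTo F i = (lowerClosure (insert (F i) (F '' Set.Iio i)) : Set (Finset U)) := by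
  rw [← Set.image_insert_eq, Set.Iio_insert]
  ext σ
  simp [genUpTo, mem_lowerClosure]

end Facets

theorem isLeaf_lowerClosure_insert_iff {A : Finset V} {S : Set (Finset V)} (hA : A ∉ S)
    (hS : IsAntichain (· ≤ ·) (insert A S)) :
    IsLeaf (lowerClosure (insert A S) : Set (Finset V)) A ↔ IsLeafOver A S := by
  have hne : ∀ B ∈ S, B ≠ A := fun B hB => ne_of_mem_of_not_mem hB hA
  have honly : (∀ B ∈ insert A S, B = A) ↔ ¬ S.Nonempty := by
    rw [Set.forall_mem_insert, Set.not_nonempty_iff_eq_empty, Set.eq_empty_iff_forall_notMem]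
    exact ⟨fun h B hB => hne B hB (h.2 B hB), fun h => ⟨rfl, fun B hB => (h B hB).elim⟩⟩
  have hbranch : (∃ B ∈ insert A S, B ≠ A ∧ ∀ C ∈ insert A S, C ≠ A → A ∩ C ⊆ B) ↔
      ∃ B ∈ S, ∀ C ∈ S, A ∩ C ⊆ B := by
    constructor
    · rintro ⟨B, hB, hBA, h⟩
      exact ⟨B, hB.resolve_left hBA, fun C hC => h C (Or.inr hC) (hne C hC)⟩
    · rintro ⟨B, hB, h⟩
      exact ⟨B, Or.inr hB, hne B hB, fun C hC hCA => h C (hC.resolve_left hCA)⟩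
  simp only [IsLeaf, isFacet_lowerClosure_iff hS, Set.mem_insert A S, true_and]
  rw [honly, hbranch, ← imp_iff_not_or]
  rfl

theorem isLeaf_genUpTo_iff {n : ℕ} {F : Fin n → Finset V} (hinj : Function.Injective F)
    (hanti : IsAntichain (· ≤ ·) (Set.range F)) (i : Fin n) :
    IsLeaf (genUpTo F i) (F i) ↔ IsLeafOver (F i) (F '' Set.Iio i) := by
  rw [genUpTo_eq_lowerClosure]
  refine isLeaf_lowerClosure_insert_iff ?_ (hanti.subset ?_)
  · rw [hinj.mem_set_image]
    exact lt_irrefl i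
  · exact Set.insert_subset (Set.mem_range_self i) (Set.image_subset_range ..)

theorem HasRunningIntersection.isQuasiForest {S : Finset (Finset V)}
    (hS : HasRunningIntersection S) :
    IsQuasiForest (lowerClosure (S : Set (Finset V)) : Set (Finset V)) := by
  obtain ⟨T, hT, hanti, hTS⟩ := hS.exists_isAntichain
  obtain ⟨n, F, hinj, hrange, hleaf⟩ := hT.exists_enumeration
  rw [← hrange] at hanti hTS
  rw [← hTS]
  refine ⟨n, F, hinj, fun σ => ?_, fun σ hσ => ?_, fun i => ?_⟩
  · rw [isFacet_lowerClosure_iff hanti, Set.mem_range]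
    exact exists_congr fun i => eq_comm
  · simpa [mem_lowerClosure] using hσ
  · exact (isLeaf_genUpTo_iff hinj hanti i).2 (hleaf i)

theorem IsQuasiForest.exists_hasRunningIntersection {K : Set (Finset V)} (hK : IsLowerSet K)
    (hqf : IsQuasiForest K) :
    ∃ S : Finset (Finset V), HasRunningIntersection S ∧
      K = (lowerClosure (S : Set (Finset V)) : Set (Finset V)) := by
  obtain ⟨n, F, hinj, hfacet, hcover, hleaf⟩ := hqf
  have hF : ∀ i, IsFacet K (F i) := fun i => (hfacet (F i)).2 ⟨i, rfl⟩
  have hanti : IsAntichain (· ≤ ·) (Set.range F) := by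
    rintro _ ⟨i, rfl⟩ _ ⟨j, rfl⟩ hne hle
    exact hne ((hF i).2 _ (hF j).1 hle)
  refine ⟨Finset.univ.image F, .of_enumeration fun i => (isLeaf_genUpTo_iff hinj hanti i).1
    (hleaf i), Set.Subset.antisymm (fun σ hσ => ?_) (lowerClosure_min ?_ hK)⟩
  · simpa [mem_lowerClosure] using hcover σ hσ
  · simpa [Set.range_subset_iff] using fun i => (hF i).1

theorem coe_lowerClosure_image_filter (S : Finset (Finset V)) (p : V → Prop) [DecidablePred p] :
    (lowerClosure (S.image (Finset.filter p) : Set (Finset V)) : Set (Finset V)) =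
      {σ ∈ (lowerClosure (S : Set (Finset V)) : Set (Finset V)) | ∀ x ∈ σ, p x} := by
  ext σ
  have hsub : ∀ A : Finset V, σ ⊆ A.filter p ↔ σ ⊆ A ∧ ∀ x ∈ σ, p x := fun A => by
    simp only [Finset.subset_iff, Finset.mem_filter, imp_and, forall_and]
  simp only [SetLike.mem_coe, mem_lowerClosure, Finset.mem_image, exists_exists_and_eq_and,
    hsub, ← and_assoc, exists_and_right, Set.mem_ofPred_eq]

/-- Induced subcomplexes of quasi-forests are quasi-forests. -/
theorem isQuasiForest_induced (K : Set (Finset V))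
    (hdc : ∀ σ ∈ K, ∀ τ : Finset V, τ ⊆ σ → τ ∈ K)
    (hqf : IsQuasiForest K) (W : Set V) :
    IsQuasiForest {σ ∈ K | (σ : Set V) ⊆ W} := by
  classical
  have hK : IsLowerSet K := fun σ τ hτσ hσ => hdc σ hσ τ hτσ
  obtain ⟨S, hS, rfl⟩ := hqf.exists_hasRunningIntersection hK
  have hS_filter : HasRunningIntersection (S.image (Finset.filter (· ∈ W))) :=
    hS.image fun A _ B _ C _ _ hABC => by
      rw [Finset.inf_eq_inter, ← Finset.filter_inter_distrib]
      exact Finset.filter_subset_filter _ hABC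
  exact coe_lowerClosure_image_filter S (· ∈ W) ▸ hS_filter.isQuasiForest
end

section
/- Every quasi-tree is collapsible, i.e., it can be reduced to a single point by a finite sequence of collapses. -/
/-!
STATEMENT 1: Every quasi-tree is collapsible, i.e., it can be reduced to a single point
by a finite sequence of collapses.

We represent an abstract simplicial complex by its set of faces `K : Set (Finset V)`
(a collection of finite subsets of `V`), together with the downward-closedness hypothesis.
-/

variable {V : Type*} [DecidableEq V]

/-- A complex is connected if it has at least one vertex and any two of its vertices are
joined by a path of edges of the complex. -/
def IsConnectedComplex (K : Set (Finset V)) : Prop :=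
  (∃ v : V, {v} ∈ K) ∧
    ∀ u v : V, {u} ∈ K → {v} ∈ K →
      Relation.ReflTransGen (fun a b => ({a, b} : Finset V) ∈ K) u v

/-- `K'` is obtained from `K` by a single collapse: there is a face `σ` properly contained
in a unique facet `F` (a free face), and `K'` is obtained by removing all faces `τ` with
`σ ⊆ τ ⊆ F`. -/
def CollapseStep (K K' : Set (Finset V)) : Prop :=
  ∃ σ F : Finset V, σ ∈ K ∧ IsFacet K F ∧ σ ⊂ F ∧
    (∀ G, IsFacet K G → σ ⊂ G → G = F) ∧
    K' = K \ {τ | σ ⊆ τ ∧ τ ⊆ F}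

/-- A complex is collapsible if some finite sequence of collapses reduces it to a
one-point complex. -/
def Collapsible (K : Set (Finset V)) : Prop :=
  ∃ K' : Set (Finset V), Relation.ReflTransGen CollapseStep K K' ∧
    ∃ v : V, K' = {σ : Finset V | σ ⊆ {v}}

/-!
Let `F` be a leaf of a connected complex `K`, and let `L` be generated by the other facets. The
leaf condition says that `L ∩ ⟨F⟩` is a single simplex `⟨A⟩`, and connectedness of `K = L ∪ ⟨F⟩`
makes `A` nonempty. The vertices of `F \ A` can then be collapsed away one at a time, each being
free because `F` is the only facet containing it; and `L` is again connected because `L ∪ ⟨F⟩` and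
`L ∩ ⟨F⟩` are. Removing the facets of a quasi-tree in reverse leaf order leaves a single simplex,
which collapses to any of its vertices.
-/

/-- `K` collapses to `L`: some finite, possibly empty, sequence of collapses turns `K` into `L`. -/
abbrev CollapsesTo (K L : Set (Finset V)) : Prop :=
  Relation.ReflTransGen CollapseStep K L

/-- The complex generated by the facets of `K` other than `F`, which is what remains of `K`
when a leaf `F` is removed. Faces of `F` that lie in another facet are kept. -/
def eraseFacet (K : Set (Finset V)) (F : Finset V) : Set (Finset V) :=
  {σ | ∃ H, IsFacet K H ∧ H ≠ F ∧ σ ⊆ H}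

section Collapse

variable {L : Set (Finset V)} {A F S : Finset V} {v : V}

theorem collapseStep_union_Iic_insert (hF : F.Nonempty) (hvF : v ∉ F) (hvL : ∀ σ ∈ L, v ∉ σ) :
    CollapseStep (L ∪ Set.Iic (insert v F)) (L ∪ Set.Iic F) := by
  have hfacet : IsFacet (L ∪ Set.Iic (insert v F)) (insert v F) := by
    refine ⟨Or.inr Set.self_mem_Iic, ?_⟩
    rintro G (hGL | hGF) hFG
    · exact absurd (hFG (Finset.mem_insert_self v F)) (hvL G hGL)
    · exact hFG.antisymm hGF
  refine ⟨{v}, insert v F, Or.inr (by simp), hfacet, ?_, ?_, ?_⟩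
  · obtain ⟨a, ha⟩ := hF
    refine Finset.ssubset_iff_of_subset (by simp) |>.2 ⟨a, Finset.mem_insert_of_mem ha, ?_⟩
    exact fun hav => hvF (Finset.mem_singleton.1 hav ▸ ha)
  · rintro G ⟨hGL | hGF, hmax⟩ hvG
    · exact absurd (Finset.singleton_subset_iff.1 hvG.1) (hvL G hGL)
    · exact hmax _ hfacet.1 hGF
  · ext τ
    simp only [Set.mem_union, Set.mem_Iic, Set.mem_sdiff, Set.mem_ofPred_eq,
      Finset.singleton_subset_iff]
    have hτL : τ ∈ L → v ∉ τ := hvL τ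
    have hτF : τ ⊆ F ↔ τ ⊆ insert v F ∧ v ∉ τ := by
      rw [← Finset.subset_erase, Finset.erase_insert hvF]
    tauto

theorem collapsesTo_union_Iic_union (hA : A.Nonempty) (hAL : Set.Iic A ⊆ L)
    (hS : ∀ v ∈ S, ∀ σ ∈ L, v ∉ σ) : CollapsesTo (L ∪ Set.Iic (A ∪ S)) L := by
  induction S using Finset.induction with
  | empty => rw [Finset.union_empty, Set.union_eq_left.2 hAL]
  | insert v S hvS ih =>
    rw [Finset.forall_mem_insert] at hS
    have hvA : v ∉ A := hS.1 A (hAL Set.self_mem_Iic)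
    have hvAS : v ∉ A ∪ S := Finset.notMem_union.2 ⟨hvA, hvS⟩
    rw [Finset.union_insert]
    exact .head (collapseStep_union_Iic_insert hA.inl hvAS hS.1) (ih hS.2)

end Collapse

section Glue

variable {α : Type*} {L : Set (Finset α)} {A F : Finset α}

theorem collapsesTo_union_Iic_of_inter_eq (hL : IsLowerSet L) (hA : A.Nonempty)
    (hLF : L ∩ Set.Iic F = Set.Iic A) : CollapsesTo (L ∪ Set.Iic F) L := by
  classical
  have hAL : Set.Iic A ⊆ L := hLF ▸ Set.inter_subset_left
  have hAF : A ⊆ F := (hLF.ge Set.self_mem_Iic).2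
  rw [← Finset.union_sdiff_of_subset hAF]
  refine collapsesTo_union_Iic_union hA hAL fun v hv σ hσ hvσ => ?_
  obtain ⟨hvF, hvA⟩ := Finset.mem_sdiff.1 hv
  have hvL : {v} ∈ L := hL (Finset.singleton_subset_iff.2 hvσ) hσ
  exact hvA (Finset.singleton_subset_iff.1
    (hLF.le ⟨hvL, Finset.singleton_subset_iff.2 hvF⟩))

theorem collapsible_Iic (hF : F.Nonempty) : Collapsible (Set.Iic F) := by
  obtain ⟨v, hv⟩ := hF
  have hvF : Set.Iic {v} ⊆ Set.Iic F := Set.Iic_subset_Iic.2 (Finset.singleton_subset_iff.2 hv)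
  have hcollapse := collapsesTo_union_Iic_of_inter_eq (isLowerSet_Iic _)
    (Finset.singleton_nonempty v) (Set.inter_eq_left.2 hvF)
  rw [Set.union_eq_right.2 hvF] at hcollapse
  exact ⟨Set.Iic {v}, hcollapse, v, rfl⟩

end Glue

section Connected

variable {L M : Set (Finset V)}

theorem isConnectedComplex_Iic {A : Finset V} (hA : A.Nonempty) :
    IsConnectedComplex (Set.Iic A) := by
  simp only [IsConnectedComplex, Set.mem_Iic, Finset.singleton_subset_iff]
  exact ⟨hA, fun u v hu hv => .single
    (Finset.insert_subset hu (Finset.singleton_subset_iff.2 hv))⟩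

theorem exists_singleton_mem_inter_of_isConnectedComplex_union (hL : IsLowerSet L)
    (hM : IsLowerSet M) (hconn : IsConnectedComplex (L ∪ M)) (hLv : ∃ v, {v} ∈ L)
    (hMv : ∃ v, {v} ∈ M) : ∃ v, {v} ∈ L ∩ M := by
  obtain ⟨u, hu⟩ := hLv
  obtain ⟨w, hw⟩ := hMv
  by_contra! hdisj
  have hstay : ∀ x, Relation.ReflTransGen (fun a b => {a, b} ∈ L ∪ M) u x → {x} ∈ L := by
    intro x hx
    induction hx with
    | refl => exact hu
    | @tail x y _ hxy hxL =>
      rcases hxy with hxy | hxy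
      · exact hL (by simp) hxy
      · exact absurd ⟨hxL, hM (by simp) hxy⟩ (hdisj x)
  exact hdisj w ⟨hstay w (hconn.2 u w (.inl hu) (.inr hw)), hw⟩

theorem isConnectedComplex_of_union_of_inter (hL : IsLowerSet L) (hM : IsLowerSet M)
    (hunion : IsConnectedComplex (L ∪ M)) (hinter : IsConnectedComplex (L ∩ M)) :
    IsConnectedComplex L := by
  obtain ⟨⟨a, haL, haM⟩, hpath⟩ := hinter
  have hpathL (x y : V) (hx : {x} ∈ L ∩ M) (hy : {y} ∈ L ∩ M) :
      Relation.ReflTransGen (fun b c => {b, c} ∈ L) x y :=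
    Relation.ReflTransGen.mono (fun _ _ h => h.1) _ _ (hpath x y hx hy)
  refine ⟨⟨a, haL⟩, fun u w hu hw => ?_⟩
  -- Excursions of a path into `M` are rerouted through the base vertex `a` of `L ∩ M`.
  have hreroute : ∀ x, Relation.ReflTransGen (fun b c => {b, c} ∈ L ∪ M) u x →
      ({x} ∈ L → Relation.ReflTransGen (fun b c => {b, c} ∈ L) u x) ∧
      ({x} ∈ M → Relation.ReflTransGen (fun b c => {b, c} ∈ L) u a) := by
    intro x hx
    induction hx with
    | refl => exact ⟨fun _ => .refl, fun huM => hpathL u a ⟨hu, huM⟩ ⟨haL, haM⟩⟩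
    | @tail x y _ hxy ih =>
      rcases hxy with hxy | hxy
      · have hyL : {y} ∈ L := hL (by simp) hxy
        have huy := (ih.1 (hL (by simp) hxy)).tail hxy
        exact ⟨fun _ => huy, fun hyM => huy.trans (hpathL y a ⟨hyL, hyM⟩ ⟨haL, haM⟩)⟩
      · have hyM : {y} ∈ M := hM (by simp) hxy
        have hua := ih.2 (hM (by simp) hxy)
        exact ⟨fun hyL => hua.trans (hpathL a y ⟨haL, haM⟩ ⟨hyL, hyM⟩), fun _ => hua⟩
  exact (hreroute w (hunion.2 u w (.inl hu) (.inl hw))).1 hw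

end Connected

section Facet

variable {α : Type*} {K : Set (Finset α)} {F G : Finset α}

theorem IsFacet.nonempty_of_ne (hF : IsFacet K F) (hG : IsFacet K G) (hne : F ≠ G) :
    F.Nonempty := by
  rw [Finset.nonempty_iff_ne_empty]
  rintro rfl
  exact hne (hF.2 G hG.1 (Finset.empty_subset G))

theorem isLowerSet_eraseFacet (K : Set (Finset α)) (F : Finset α) :
    IsLowerSet (eraseFacet K F) :=
  fun _ _ hτσ ⟨H, hH, hHF, hσH⟩ => ⟨H, hH, hHF, hτσ.trans hσH⟩

theorem eraseFacet_union_Iic (hK : IsLowerSet K) (hcover : ∀ σ ∈ K, ∃ H, IsFacet K H ∧ σ ⊆ H)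
    (hF : F ∈ K) : eraseFacet K F ∪ Set.Iic F = K := by
  ext σ
  constructor
  · rintro (⟨H, hH, -, hσH⟩ | hσF)
    · exact hK hσH hH.1
    · exact hK hσF hF
  · intro hσ
    obtain ⟨H, hH, hσH⟩ := hcover σ hσ
    rcases eq_or_ne H F with rfl | hHF
    · exact .inr hσH
    · exact .inl ⟨H, hH, hHF, hσH⟩

end Facet

section Leaf

variable {K : Set (Finset V)} {F G : Finset V}

theorem IsLeaf.exists_eraseFacet_inter_Iic_eq (hF : IsLeaf K F) (hG : IsFacet K G) (hGF : G ≠ F) :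
    ∃ A, eraseFacet K F ∩ Set.Iic F = Set.Iic A := by
  rcases hF.2 with honly | ⟨B, hB, hBF, hbranch⟩
  · exact absurd (honly G hG) hGF
  refine ⟨F ∩ B, Set.ext fun σ => ⟨?_, fun hσ => ?_⟩⟩
  · rintro ⟨⟨H, hH, hHF, hσH⟩, hσF⟩
    exact Finset.subset_inter hσF ((Finset.subset_inter hσF hσH).trans (hbranch H hH hHF))
  · obtain ⟨hσF, hσB⟩ := Finset.subset_inter_iff.1 hσ
    exact ⟨⟨B, hB, hBF, hσB⟩, hσF⟩

theorem IsLeaf.exists_nonempty_eraseFacet_inter_Iic_eq (hF : IsLeaf K F) (hG : IsFacet K G)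
    (hGF : G ≠ F) (hconn : IsConnectedComplex (eraseFacet K F ∪ Set.Iic F)) :
    ∃ A, A.Nonempty ∧ eraseFacet K F ∩ Set.Iic F = Set.Iic A := by
  obtain ⟨A, hA⟩ := hF.exists_eraseFacet_inter_Iic_eq hG hGF
  obtain ⟨u, hu⟩ := hG.nonempty_of_ne hF.1 hGF
  obtain ⟨w, hw⟩ := hF.1.nonempty_of_ne hG hGF.symm
  obtain ⟨v, hv⟩ := exists_singleton_mem_inter_of_isConnectedComplex_union
    (isLowerSet_eraseFacet K F) (isLowerSet_Iic F) hconn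
    ⟨u, G, hG, hGF, Finset.singleton_subset_iff.2 hu⟩ ⟨w, Finset.singleton_subset_iff.2 hw⟩
  exact ⟨A, ⟨v, Finset.singleton_subset_iff.1 (hA.le hv)⟩, hA⟩

theorem IsLeaf.isConnectedComplex_eraseFacet (hF : IsLeaf K F) (hG : IsFacet K G)
    (hGF : G ≠ F) (hconn : IsConnectedComplex (eraseFacet K F ∪ Set.Iic F)) :
    IsConnectedComplex (eraseFacet K F) := by
  obtain ⟨A, hA, hinter⟩ := hF.exists_nonempty_eraseFacet_inter_Iic_eq hG hGF hconn
  exact isConnectedComplex_of_union_of_inter (isLowerSet_eraseFacet K F) (isLowerSet_Iic F) hconn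
    (hinter ▸ isConnectedComplex_Iic hA)

theorem IsLeaf.collapsesTo_eraseFacet (hF : IsLeaf K F) (hG : IsFacet K G) (hGF : G ≠ F)
    (hconn : IsConnectedComplex (eraseFacet K F ∪ Set.Iic F)) :
    CollapsesTo (eraseFacet K F ∪ Set.Iic F) (eraseFacet K F) := by
  obtain ⟨A, hA, hinter⟩ := hF.exists_nonempty_eraseFacet_inter_Iic_eq hG hGF hconn
  exact collapsesTo_union_Iic_of_inter_eq (isLowerSet_eraseFacet K F) hA hinter

end Leaf

section LeafOrder

variable {α : Type*}

theorem isLowerSet_genUpTo {t : ℕ} (F : Fin t → Finset α) (i : Fin t) :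
    IsLowerSet (genUpTo F i) :=
  fun _ _ hτσ ⟨j, hj, hσ⟩ => ⟨j, hj, hτσ.trans hσ⟩

theorem genUpTo_zero {n : ℕ} (F : Fin (n + 1) → Finset α) : genUpTo F 0 = Set.Iic (F 0) := by
  simp [genUpTo, Set.Iic]

theorem isFacet_genUpTo_iff {t : ℕ} {F : Fin t → Finset α}
    (hF : ∀ ⦃i j⦄, F i ⊆ F j → i = j) {i : Fin t} {H : Finset α} :
    IsFacet (genUpTo F i) H ↔ ∃ j ≤ i, H = F j := by
  constructor
  · rintro ⟨⟨j, hj, hHj⟩, hmax⟩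
    exact ⟨j, hj, hmax (F j) ⟨j, hj, subset_rfl⟩ hHj⟩
  · rintro ⟨j, hj, rfl⟩
    refine ⟨⟨j, hj, subset_rfl⟩, ?_⟩
    rintro G ⟨k, -, hGk⟩ hjG
    obtain rfl := hF (hjG.trans hGk)
    exact hjG.antisymm hGk

theorem eraseFacet_genUpTo_succ {n : ℕ} {F : Fin (n + 1) → Finset α}
    (hF : ∀ ⦃i j⦄, F i ⊆ F j → i = j) (i : Fin n) :
    eraseFacet (genUpTo F i.succ) (F i.succ) = genUpTo F i.castSucc := by
  ext σ
  constructor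
  · rintro ⟨H, hH, hne, hσ⟩
    obtain ⟨j, hj, rfl⟩ := (isFacet_genUpTo_iff hF).1 hH
    have hjlt : j < i.succ := hj.lt_of_ne fun hji => hne (congrArg F hji)
    exact ⟨j, Fin.le_castSucc_iff.2 hjlt, hσ⟩
  · rintro ⟨j, hj, hσ⟩
    have hjlt : j < i.succ := Fin.le_castSucc_iff.1 hj
    exact ⟨F j, (isFacet_genUpTo_iff hF).2 ⟨j, hjlt.le, rfl⟩,
      fun hji => hjlt.ne (hF hji.subset), hσ⟩

end LeafOrder

theorem collapsible_genUpTo {n : ℕ} {F : Fin (n + 1) → Finset V}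
    (hF : ∀ ⦃i j⦄, F i ⊆ F j → i = j) (hleaf : ∀ i, IsLeaf (genUpTo F i) (F i))
    (i : Fin (n + 1)) (hconn : IsConnectedComplex (genUpTo F i)) :
    Collapsible (genUpTo F i) := by
  induction i using Fin.induction with
  | zero =>
    rw [genUpTo_zero] at hconn ⊢
    obtain ⟨v, hv⟩ := hconn.1
    exact collapsible_Iic ⟨v, Finset.singleton_subset_iff.1 hv⟩
  | succ i ih =>
    have hfacet {j} (hj : j ≤ i.succ) : IsFacet (genUpTo F i.succ) (F j) :=
      (isFacet_genUpTo_iff hF).2 ⟨j, hj, rfl⟩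
    have hne : F i.castSucc ≠ F i.succ := fun h => i.castSucc_lt_succ.ne (hF h.subset)
    have hG := hfacet i.castSucc_lt_succ.le
    have hunion := eraseFacet_union_Iic (isLowerSet_genUpTo F i.succ)
      (fun _ ⟨j, hj, hσ⟩ => ⟨F j, hfacet hj, hσ⟩) (hfacet le_rfl).1
    rw [← hunion] at hconn
    have hconn' := (hleaf i.succ).isConnectedComplex_eraseFacet hG hne hconn
    have hcollapse := (hleaf i.succ).collapsesTo_eraseFacet hG hne hconn
    rw [hunion] at hcollapse
    rw [eraseFacet_genUpTo_succ hF] at hconn' hcollapse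
    obtain ⟨P, hP, hpoint⟩ := ih hconn'
    exact ⟨P, hcollapse.trans hP, hpoint⟩

/-- Every quasi-tree (connected quasi-forest) is collapsible. -/
theorem collapsible_of_quasiTree (K : Set (Finset V))
    (hdc : ∀ σ ∈ K, ∀ τ : Finset V, τ ⊆ σ → τ ∈ K)
    (hqf : IsQuasiForest K) (hconn : IsConnectedComplex K) :
    Collapsible K := by
  obtain ⟨t, F, hinj, hfacet, hcover, hleaf⟩ := hqf
  obtain ⟨v, hv⟩ := hconn.1
  obtain ⟨i, -⟩ := hcover {v} hv
  obtain ⟨n, rfl⟩ : ∃ n, t = n + 1 := Nat.exists_eq_succ_of_ne_zero i.pos.ne'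
  have hF (i) : IsFacet K (F i) := (hfacet _).2 ⟨i, rfl⟩
  have hK : K = genUpTo F (Fin.last n) := by
    ext σ
    constructor
    · intro hσ
      obtain ⟨j, hj⟩ := hcover σ hσ
      exact ⟨j, j.le_last, hj⟩
    · rintro ⟨j, -, hj⟩
      exact hdc (F j) (hF j).1 σ hj
  rw [hK] at hconn ⊢
  exact collapsible_genUpTo (fun i j hij => hinj ((hF i).2 _ (hF j).1 hij)) hleaf _ hconn
end

section
/- Let q ≤ 3 and let m_1,…,m_q be square-free monomials forming a minimal generating set (m_i does not divide m_j for i ≠ j). For any r ≥ 1, if a, b ∈ N^r_q and m^a divides m^b, then a = b. -/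
/-!
STATEMENT 4: Let q ≤ 3 and let m_1,…,m_q be square-free monomials forming a minimal
generating set. For any r ≥ 1, if a, b ∈ N^r_q and m^a divides m^b, then a = b.

Monomials in k[x_1,…,x_n] are identified with their exponent vectors in ℕ^n;
divisibility is the componentwise order.
-/

open Finset

/-- The exponent vector of `m^a = m_1^{a_1} ⋯ m_q^{a_q}`. -/
def mpow {n q : ℕ} (m : Fin q → Fin n → ℕ) (a : Fin q → ℕ) : Fin n → ℕ :=
  fun k => ∑ j, a j * m j k

/-!
Every variable divides a set `S` of the generators, and the divisibility says that the total
`a`-weight of each such `S` is at most its total `b`-weight. If `a ≠ b`, then, the totals over all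
generators being equal, `b i < a i` and `a j < b j` for some `i` and `j`. A variable dividing `m i`
but not `m j` gives an `S` containing `i` but not `j`; among at most three generators, `S` is `{i}`
or the complement of `{j}`. The inequality for `S` contradicts `b i < a i` in the first case; in
the second it yields `b j ≤ a j` after subtraction from the totals.
-/

lemma exists_eq_one_and_eq_zero_of_not_le {κ : Type*} {u v : κ → ℕ} (hu : ∀ k, u k ≤ 1)
    (h : ¬ u ≤ v) : ∃ k, u k = 1 ∧ v k = 0 := by
  obtain ⟨k, hk⟩ : ∃ k, v k < u k := by simpa only [Pi.le_def, not_forall, not_le] using h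
  have := hu k
  exact ⟨k, by omega, by omega⟩

section FiniteIndex

variable {ι : Type*} [Fintype ι]

lemma eq_singleton_or_eq_compl_singleton_of_card_le_three [DecidableEq ι]
    (hι : Fintype.card ι ≤ 3) {s : Finset ι} {i j : ι} (hi : i ∈ s) (hj : j ∉ s) :
    s = {i} ∨ s = {j}ᶜ := by
  have hcard : #s + #sᶜ ≤ 3 := (card_add_card_compl s).trans_le hι
  obtain hs | hs : #s ≤ 1 ∨ #sᶜ ≤ 1 := by omega
  · exact .inl (eq_singleton_iff_unique_mem.2 ⟨hi, fun _ hx => card_le_one.1 hs _ hx _ hi⟩)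
  · have hj' : j ∈ sᶜ := mem_compl.2 hj
    exact .inr (eq_compl_comm.1
      (eq_singleton_iff_unique_mem.2 ⟨hj', fun _ hx => card_le_one.1 hs _ hx _ hj'⟩).symm)

lemma sum_smul_eq_sum_filter_of_le_one {M : Type*} [AddCommMonoid M] {u : ι → ℕ}
    (hu : ∀ j, u j ≤ 1) (a : ι → M) : ∑ j, u j • a j = ∑ j with u j = 1, a j := by
  rw [sum_filter]
  refine sum_congr rfl fun j _ => ?_
  obtain h | h := Nat.le_one_iff_eq_zero_or_eq_one.1 (hu j) <;> simp [h]

variable {M : Type*} [AddCommMonoid M] [LinearOrder M] [IsOrderedCancelAddMonoid M] {a b : ι → M}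

lemma exists_lt_of_sum_eq_of_ne (hsum : ∑ i, a i = ∑ i, b i) (hne : a ≠ b) : ∃ i, a i < b i := by
  by_contra! hba
  exact (Fintype.sum_strictMono (lt_of_le_of_ne hba hne.symm)).ne' hsum

lemma le_of_sum_compl_singleton_le [DecidableEq ι] (hsum : ∑ i, a i = ∑ i, b i) {j : ι}
    (h : ∑ i ∈ {j}ᶜ, a i ≤ ∑ i ∈ {j}ᶜ, b i) : b j ≤ a j := by
  rw [Fintype.sum_eq_add_sum_compl j, Fintype.sum_eq_add_sum_compl j] at hsum
  by_contra! hlt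
  exact (add_lt_add_of_lt_of_le hlt h).ne hsum

lemma le_or_le_of_sum_le_sum_of_card_le_three (hι : Fintype.card ι ≤ 3)
    (hsum : ∑ i, a i = ∑ i, b i) {s : Finset ι} (hs : ∑ i ∈ s, a i ≤ ∑ i ∈ s, b i)
    {i j : ι} (hi : i ∈ s) (hj : j ∉ s) : a i ≤ b i ∨ b j ≤ a j := by
  classical
  obtain rfl | rfl := eq_singleton_or_eq_compl_singleton_of_card_le_three hι hi hj
  · exact .inl (by simpa only [sum_singleton] using hs)
  · exact .inr (le_of_sum_compl_singleton_le hsum hs)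

theorem eq_of_mpow_dvd_of_q_le_three_general {κ : Type*} (hι : Fintype.card ι ≤ 3)
    {m : ι → κ → ℕ} (hsf : ∀ j k, m j k ≤ 1) (hmin : ∀ i j, i ≠ j → ¬ m i ≤ m j)
    (hsum : ∑ j, a j = ∑ j, b j) (hdvd : ∀ k, ∑ j, m j k • a j ≤ ∑ j, m j k • b j) :
    a = b := by
  by_contra hne
  obtain ⟨i, hi⟩ := exists_lt_of_sum_eq_of_ne hsum.symm (Ne.symm hne)
  obtain ⟨j, hj⟩ := exists_lt_of_sum_eq_of_ne hsum hne
  have hij : i ≠ j := fun h => (h ▸ hi).asymm hj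
  obtain ⟨k, hik, hjk⟩ := exists_eq_one_and_eq_zero_of_not_le (hsf i) (hmin i j hij)
  have hle : ∑ l with m l k = 1, a l ≤ ∑ l with m l k = 1, b l := by
    simpa only [sum_smul_eq_sum_filter_of_le_one fun l => hsf l k] using hdvd k
  have hor : a i ≤ b i ∨ b j ≤ a j :=
    le_or_le_of_sum_le_sum_of_card_le_three hι hsum hle (by simp [hik]) (by simp [hjk])
  exact hor.elim hi.not_ge hj.not_ge

end FiniteIndex

theorem eq_of_mpow_dvd_of_q_le_three {n q r : ℕ} (hq : q ≤ 3) (hr : 1 ≤ r)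
    (m : Fin q → Fin n → ℕ)
    (hsf : ∀ j k, m j k ≤ 1)
    (hmin : ∀ i j, i ≠ j → ¬ m i ≤ m j)
    (a b : Fin q → ℕ) (ha : ∑ i, a i = r) (hb : ∑ i, b i = r)
    (hdvd : mpow m a ≤ mpow m b) :
    a = b := by
  refine eq_of_mpow_dvd_of_q_le_three_general (by rwa [Fintype.card_fin]) hsf hmin
    (ha.trans hb.symm) fun k => ?_
  simpa only [mpow, smul_eq_mul, mul_comm] using hdvd k
end

section
/- Let r ≥ 1 and let m_1,…,m_q be square-free monomials forming a minimal generating set. For any i ∈ {1,…,q} and a ∈ N^r_q, if m^a divides m_i^r, then a = r·e_i. -/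
/-!
STATEMENT 5: Let r ≥ 1 and let m_1,…,m_q be square-free monomials forming a minimal
generating set. For any i and a ∈ N^r_q, if m^a divides m_i^r, then a = r·e_i.

Monomials are identified with their exponent vectors in ℕ^n; divisibility is the
componentwise order.
-/

open Finset

/-!
A generator `m_j` with `a_j > 0` divides `m^a`, hence `m_i^r`, so every variable of `m_j` occurs
in `m_i`. For square-free monomials this says `m_j ∣ m_i`, and minimality forces `j = i`.
-/

section General

variable {ι κ R : Type*} [Fintype ι]

theorem eq_single_sum_of_forall_ne [DecidableEq ι] [AddCommMonoid R] {a : ι → R} {i : ι}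
    (h : ∀ j ≠ i, a j = 0) : a = Pi.single i (∑ j, a j) := by
  rw [Fintype.sum_eq_single i h]
  funext j
  obtain rfl | hj := eq_or_ne j i
  · rw [Pi.single_eq_same]
  · rw [Pi.single_eq_of_ne hj, h j hj]

theorem le_of_le_one_of_support_subset {f g : κ → ℕ} (hf : f ≤ 1)
    (h : Function.support f ⊆ Function.support g) : f ≤ g := by
  intro k
  obtain hk | hk := eq_or_ne (f k) 0
  · exact hk.trans_le (Nat.zero_le _)
  · exact (hf k).trans (Nat.one_le_iff_ne_zero.mpr (h hk))

variable [NonUnitalNonAssocSemiring R] [PartialOrder R] [CanonicallyOrderedAdd R]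
  [NoZeroDivisors R]

theorem support_subset_of_sum_mul_le {a : ι → R} {m : ι → κ → R} {f : κ → R}
    (h : ∀ k, ∑ j, a j * m j k ≤ f k) {j : ι} (hj : a j ≠ 0) :
    Function.support (m j) ⊆ Function.support f := by
  intro k hmk hfk
  have hterm : a j * m j k ≤ ∑ l, a l * m l k :=
    single_le_sum_of_canonicallyOrdered (f := fun l => a l * m l k) (mem_univ j)
  have hzero : a j * m j k = 0 := nonpos_iff_eq_zero.mp ((hterm.trans (h k)).trans_eq hfk)
  exact mul_ne_zero hj hmk hzero

theorem eq_single_of_mpow_dvd_pow_general [DecidableEq ι] {r s : R} (m : ι → κ → R) (i : ι)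
    (hmin : ∀ j ≠ i, ¬ Function.support (m j) ⊆ Function.support (m i))
    (a : ι → R) (ha : ∑ j, a j = r) (hdvd : ∀ k, ∑ j, a j * m j k ≤ s * m i k) :
    a = Pi.single i r := by
  have hzero : ∀ j ≠ i, a j = 0 := by
    intro j hj
    by_contra haj
    exact hmin j hj <|
      (support_subset_of_sum_mul_le hdvd haj).trans (Function.support_mul_subset_right _ _)
  exact ha ▸ eq_single_sum_of_forall_ne hzero

end General

theorem eq_single_of_mpow_dvd_pow {n q r : ℕ} (hr : 1 ≤ r)
    (m : Fin q → Fin n → ℕ)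
    (hsf : ∀ j k, m j k ≤ 1)
    (hmin : ∀ i j, i ≠ j → ¬ m i ≤ m j)
    (i : Fin q) (a : Fin q → ℕ) (ha : ∑ j, a j = r)
    (hdvd : mpow m a ≤ fun k => r * m i k) :
    a = Pi.single i r :=
  eq_single_of_mpow_dvd_pow_general m i
    (fun j hj hsupp => hmin j i hj (le_of_le_one_of_support_subset (hsf j) hsupp)) a ha hdvd
end

section
/- Let r ≥ 1, q ≥ 2, and let m_1,…,m_q be square-free monomials forming a minimal generating set. Suppose i ∈ {1,…,q} and M is a monomial in LCM(I^r) such that m_i^{r−1} divides M and M ≠ m_i^r. Then there exists j ∈ {1,…,q} with j ≠ i such that m_j divides M and, for every a ∈ N^r_q, m^a divides m_i^{r−1}·m_j if and only if a = (r−1)·e_i + e_j. -/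
/-!
STATEMENT 6: Let r ≥ 1, q ≥ 2, and let m_1,…,m_q be square-free monomials forming a
minimal generating set. Suppose i ∈ [q] and M ∈ LCM(I^r) with m_i^{r−1} ∣ M and
M ≠ m_i^r. Then there exists j ≠ i such that m_j ∣ M and, for every a ∈ N^r_q,
m^a ∣ m_i^{r−1}·m_j ↔ a = (r−1)·e_i + e_j.

Monomials are identified with their exponent vectors in ℕ^n; divisibility is the
componentwise order, and the lcm is the componentwise maximum.
-/

open Finset

/-- `LCM(I^r)`: the monomials arising as least common multiples of nonempty subsets of
`{m^a : a ∈ N^r_q}`. -/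
def lcmLattice {n q : ℕ} (m : Fin q → Fin n → ℕ) (r : ℕ) : Set (Fin n → ℕ) :=
  {M | ∃ T : Finset (Fin q → ℕ), T.Nonempty ∧ (∀ a ∈ T, ∑ j, a j = r) ∧
    M = fun k => T.sup fun a => mpow m a k}

/-!
Since `M ≠ m_i^r`, some `m_j` with `j ≠ i` divides `M`. Among these choose one whose degree `d` in
the variables not dividing `m_i` is least; `d > 0` because `m_j` is square-free and does not divide
`m_i`. Suppose `m^a ∣ m_i^(r-1) m_j`. Every `m_l` with `l ≠ i` and `a_l > 0` is a square-free
divisor of `m_i^(r-1) m_j`, hence divides `lcm(m_i^(r-1), m_j)` and so `M`; by the choice of `j` it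
has degree at least `d` in these variables. The whole product has degree at most `d` there, so at
most one factor of `m^a` differs from `m_i`. Thus `m^a = m_i^(r-1) m_l` for some `l`, and
cancelling gives `m_l ∣ m_j`, that is `l = j`.
-/

section ExponentVectors

variable {ι : Type*} [Fintype ι] {a : ι → ℕ} {i : ι}

theorem sum_le_apply_add_of_sum_mul_le {w : ι → ℕ} {c t : ℕ} (hc : 0 < c)
    (hw : ∀ l, l ≠ i → a l ≠ 0 → c ≤ w l) (h : ∑ l, a l * w l ≤ t * c) :
    ∑ l, a l ≤ a i + t := by
  classical
  rw [← add_sum_erase univ a (mem_univ i)]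
  refine Nat.add_le_add_left (Nat.le_of_mul_le_mul_right ?_ hc) _
  calc (∑ l ∈ univ.erase i, a l) * c
      = ∑ l ∈ univ.erase i, a l * c := sum_mul ..
    _ ≤ ∑ l ∈ univ.erase i, a l * w l := sum_le_sum fun l hl => by
        obtain h0 | h0 := eq_or_ne (a l) 0
        · simp [h0]
        · exact Nat.mul_le_mul_left _ (hw l (ne_of_mem_erase hl) h0)
    _ ≤ ∑ l, a l * w l := sum_le_sum_of_subset (erase_subset i univ)
    _ ≤ t * c := h

variable [DecidableEq ι]

theorem exists_ne_apply_ne_zero_of_ne_single {r : ℕ} (ha : ∑ l, a l = r)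
    (hne : a ≠ Pi.single i r) : ∃ l, l ≠ i ∧ a l ≠ 0 := by
  contrapose! hne
  have hi : a i = r := (Fintype.sum_eq_single i hne).symm.trans ha
  funext l
  obtain rfl | hl := eq_or_ne l i
  · rw [hi, Pi.single_eq_same]
  · rw [hne l hl, Pi.single_eq_of_ne hl]

theorem exists_eq_single_add_single {s : ℕ} (ha : ∑ l, a l = s + 1) (hs : s ≤ a i) :
    ∃ l, a = Pi.single i s + Pi.single l 1 := by
  have hle : Pi.single i s ≤ a := update_le_iff.mpr ⟨hs, fun _ _ => Nat.zero_le _⟩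
  have hne : a ≠ Pi.single i s := by
    rintro rfl
    simp at ha
  obtain ⟨l, hl⟩ := (Pi.lt_def.mp (hle.lt_of_ne hne.symm)).2
  have hle' : Pi.single i s + Pi.single l 1 ≤ a := fun k => by
    obtain rfl | hk := eq_or_ne k l
    · simpa using hl
    · simpa [hk] using hle k
  have hsum : ∑ k, (Pi.single i s + Pi.single l 1 : ι → ℕ) k = ∑ k, a k := by
    simp [sum_add_distrib, ha]
  exact ⟨l, (funext fun k =>
    (sum_eq_sum_iff_of_le fun k _ => hle' k).mp hsum k (mem_univ k)).symm⟩

end ExponentVectors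

section SquareFree

variable {κ : Type*}

theorem le_sup_of_le_add_of_le_one {u v w : κ → ℕ} (hw : ∀ k, w k ≤ 1) (h : w ≤ u + v) :
    w ≤ u ⊔ v := by
  intro k
  have h₁ := hw k
  have h₂ := h k
  simp only [Pi.add_apply, Pi.sup_apply] at h₂ ⊢
  omega

variable [Fintype κ]

/-- The degree of the monomial with exponent vector `v` in the variables that do not divide the
monomial with exponent vector `u`. It is additive in `v`, vanishes at `v = u`, and so ignores the
factor `m_i^(r-1)` when `u` is the exponent vector of `m_i`. -/
def degreeOff (u v : κ → ℕ) : ℕ :=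
  ∑ k with u k = 0, v k

theorem degreeOff_self (u : κ → ℕ) : degreeOff u u = 0 :=
  sum_eq_zero fun _ hk => (mem_filter.mp hk).2

theorem degreeOff_mono (u : κ → ℕ) : Monotone (degreeOff u) :=
  fun _ _ h => sum_le_sum fun k _ => h k

theorem degreeOff_pos {u v : κ → ℕ} (hv : ∀ k, v k ≤ 1) (h : ¬ v ≤ u) : 0 < degreeOff u v := by
  obtain ⟨k, hk⟩ : ∃ k, u k < v k := by simpa [Pi.le_def] using h
  have huk : u k = 0 := by have := hv k; omega
  exact sum_pos' (fun _ _ => Nat.zero_le _)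
    ⟨k, mem_filter.mpr ⟨mem_univ k, huk⟩, (Nat.zero_le _).trans_lt hk⟩

end SquareFree

section Products

variable {n q : ℕ} (m : Fin q → Fin n → ℕ)

theorem mpow_add (a b : Fin q → ℕ) : mpow m (a + b) = mpow m a + mpow m b := by
  funext k
  simp [mpow, add_mul, sum_add_distrib]

theorem mpow_single (i : Fin q) (s : ℕ) : mpow m (Pi.single i s) = s • m i := by
  funext k
  simp [mpow, Pi.single_apply]

theorem le_mpow {a : Fin q → ℕ} {l : Fin q} (hl : a l ≠ 0) : m l ≤ mpow m a := fun k =>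
  calc m l k ≤ a l * m l k := Nat.le_mul_of_pos_left _ (Nat.pos_of_ne_zero hl)
    _ ≤ mpow m a k := single_le_sum (f := fun l => a l * m l k) (fun _ _ => Nat.zero_le _)
        (mem_univ l)

theorem degreeOff_mpow (u : Fin n → ℕ) (a : Fin q → ℕ) :
    degreeOff u (mpow m a) = ∑ l, a l * degreeOff u (m l) := by
  simp only [degreeOff, mpow, mul_sum]
  exact sum_comm

theorem degreeOff_mpow_single_add_single (i j : Fin q) (s : ℕ) :
    degreeOff (m i) (mpow m (Pi.single i s + Pi.single j 1)) = degreeOff (m i) (m j) := by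
  simp [degreeOff_mpow, add_mul, sum_add_distrib, Pi.single_apply, degreeOff_self]

variable {m}

theorem exists_ne_le_of_mem_lcmLattice {r : ℕ} {i : Fin q} {M : Fin n → ℕ}
    (hM : M ∈ lcmLattice m r) (hne : M ≠ fun k => r * m i k) : ∃ j, j ≠ i ∧ m j ≤ M := by
  obtain ⟨T, hT, hsum, rfl⟩ := hM
  obtain ⟨a, haT, ha⟩ : ∃ a ∈ T, a ≠ Pi.single i r := by
    contrapose! hne
    funext k
    calc T.sup (fun a => mpow m a k)
        = T.sup (fun _ => r * m i k) := sup_congr rfl fun a ha => by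
          rw [hne a ha, mpow_single, Pi.smul_apply, smul_eq_mul]
      _ = r * m i k := sup_const hT _
  obtain ⟨j, hji, hj⟩ := exists_ne_apply_ne_zero_of_ne_single (hsum a haT) ha
  exact ⟨j, hji, fun k => (le_mpow m hj k).trans (le_sup (f := fun a => mpow m a k) haT)⟩

theorem eq_single_add_single_of_mpow_le {s : ℕ} {i j : Fin q} {a : Fin q → ℕ}
    (hmin : ∀ l, l ≠ j → ¬ m l ≤ m j) (hpos : 0 < degreeOff (m i) (m j))
    (hdeg : ∀ l, l ≠ i → a l ≠ 0 → degreeOff (m i) (m j) ≤ degreeOff (m i) (m l))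
    (ha : ∑ l, a l = s + 1) (hle : mpow m a ≤ mpow m (Pi.single i s + Pi.single j 1)) :
    a = Pi.single i s + Pi.single j 1 := by
  have hdeg_le : ∑ l, a l * degreeOff (m i) (m l) ≤ 1 * degreeOff (m i) (m j) := by
    rw [one_mul, ← degreeOff_mpow, ← degreeOff_mpow_single_add_single m i j s]
    exact degreeOff_mono (m i) hle
  have hs : s ≤ a i := by
    have := sum_le_apply_add_of_sum_mul_le hpos hdeg hdeg_le
    omega
  obtain ⟨l, rfl⟩ := exists_eq_single_add_single ha hs
  have hlj : m l ≤ m j := by simpa [mpow_add, mpow_single] using hle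
  rw [of_not_not fun hne => hmin l hne hlj]

end Products

theorem exists_j_of_pow_sub_one_dvd_general {n q r : ℕ} (hr : 1 ≤ r)
    (m : Fin q → Fin n → ℕ) (i : Fin q)
    (hsf : ∀ j, j ≠ i → ∀ k, m j k ≤ 1)
    (hmin : ∀ l j, l ≠ j → ¬ m l ≤ m j)
    (M : Fin n → ℕ) (hM : ∃ j, j ≠ i ∧ m j ≤ M)
    (hdvd : (fun k => (r - 1) * m i k) ≤ M) :
    ∃ j : Fin q, j ≠ i ∧ m j ≤ M ∧
      ∀ a : Fin q → ℕ, ∑ l, a l = r →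
        (mpow m a ≤ mpow m (Pi.single i (r - 1) + Pi.single j 1) ↔
          a = Pi.single i (r - 1) + Pi.single j 1) := by
  obtain ⟨j, ⟨hji, hjM⟩, hjleast⟩ := (Set.toFinite {j | j ≠ i ∧ m j ≤ M}).exists_minimalFor
    (fun j => degreeOff (m i) (m j)) _ hM
  refine ⟨j, hji, hjM, fun a ha => ⟨fun hle => ?_, fun h => h ▸ le_rfl⟩⟩
  have hdvd_M : ∀ l, l ≠ i → a l ≠ 0 → m l ≤ M := fun l hl hal =>
    calc m l ≤ (r - 1) • m i ⊔ m j := le_sup_of_le_add_of_le_one (hsf l hl) <| by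
          simpa only [mpow_add, mpow_single, one_smul] using (le_mpow m hal).trans hle
      _ ≤ M := sup_le hdvd hjM
  have hdeg : ∀ l, l ≠ i → a l ≠ 0 → degreeOff (m i) (m j) ≤ degreeOff (m i) (m l) :=
    fun l hl hal => (le_total _ _).elim id (hjleast ⟨hl, hdvd_M l hl hal⟩)
  exact eq_single_add_single_of_mpow_le (fun l => hmin l j)
    (degreeOff_pos (hsf j hji) (hmin j i hji)) hdeg (by omega) hle

theorem exists_j_of_pow_sub_one_dvd {n q r : ℕ} (hr : 1 ≤ r) (hq : 2 ≤ q)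
    (m : Fin q → Fin n → ℕ)
    (hsf : ∀ j k, m j k ≤ 1)
    (hmin : ∀ i j, i ≠ j → ¬ m i ≤ m j)
    (i : Fin q) (M : Fin n → ℕ) (hM : M ∈ lcmLattice m r)
    (hdvd : (fun k => (r - 1) * m i k) ≤ M)
    (hne : M ≠ fun k => r * m i k) :
    ∃ j : Fin q, j ≠ i ∧ m j ≤ M ∧
      ∀ a : Fin q → ℕ, ∑ l, a l = r →
        (mpow m a ≤ mpow m (Pi.single i (r - 1) + Pi.single j 1) ↔
          a = Pi.single i (r - 1) + Pi.single j 1) :=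
  exists_j_of_pow_sub_one_dvd_general hr m i (fun j _ => hsf j) hmin M
    (exists_ne_le_of_mem_lcmLattice hM hne) hdvd
end

section
/- Let m_1,…,m_q be square-free monomials forming a minimal generating set, let i ≠ j be indices in {1,…,q}, let a = (a_1,…,a_q) and b = (b_1,…,b_q) belong to N^r_q, and let α be a non-negative integer with a_i ≥ α and b_j > r − α. Then m^b does not divide m^a. -/
/-!
STATEMENT 8: Let m_1,…,m_q be square-free monomials forming a minimal generating set,
i ≠ j, a, b ∈ N^r_q, and α ≥ 0 with a_i ≥ α and b_j > r − α. Then m^b does not divide m^a.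

Monomials are identified with their exponent vectors in ℕ^n; divisibility is the
componentwise order.
-/

open Finset

/-!
If `m_j ∤ m_i`, some variable `x_k` divides `m_j` but not `m_i`. Its exponent in `m^b` is at least
`b_j`. In `m^a` the factor `m_i^{a_i}` contributes nothing to its exponent and every other factor
`m_l^{a_l}` at most `a_l`, so the exponent is at most `r - a_i ≤ r - α < b_j`.
-/

theorem exists_eq_zero_and_eq_one_of_not_le {σ : Type*} {u v : σ → ℕ} (hv : ∀ k, v k ≤ 1)
    (hvu : ¬ v ≤ u) : ∃ k, u k = 0 ∧ v k = 1 := by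
  obtain ⟨k, hk⟩ : ∃ k, u k < v k := by simpa only [Pi.le_def, not_forall, not_le] using hvu
  have hvk := hv k
  exact ⟨k, by lia, by lia⟩

theorem sum_mul_add_le_sum_of_le_one {ι R : Type*} [Semiring R] [PartialOrder R]
    [IsOrderedRing R] {s : Finset ι} {a x : ι → R} (ha : ∀ l ∈ s, 0 ≤ a l) (hx : ∀ l ∈ s, x l ≤ 1)
    {i : ι} (hi : i ∈ s) (hxi : x i = 0) : ∑ l ∈ s, a l * x l + a i ≤ ∑ l ∈ s, a l := by
  classical
  calc ∑ l ∈ s, a l * x l + a i = ∑ l ∈ s.erase i, a l * x l + a i := by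
        rw [sum_erase s (by rw [hxi, mul_zero])]
    _ ≤ ∑ l ∈ s.erase i, a l + a i := by
        gcongr with l hl
        have hls := mem_of_mem_erase hl
        exact mul_le_of_le_one_right (ha l hls) (hx l hls)
    _ = ∑ l ∈ s, a l := sum_erase_add s a hi

theorem mpow_eq_sum_smul {n q : ℕ} (m : Fin q → Fin n → ℕ) (a : Fin q → ℕ) :
    mpow m a = ∑ l, a l • m l := by
  ext k
  simp only [mpow, Finset.sum_apply, Pi.smul_apply, smul_eq_mul]

theorem not_dvd_of_coord_large_general {ι σ : Type*} [Fintype ι] {m : ι → σ → ℕ}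
    (hsf : ∀ l k, m l k ≤ 1) {i j : ι} (hji : ¬ m j ≤ m i) {a b : ι → ℕ}
    (hab : ∑ l, a l < a i + b j) : ¬ ∑ l, b l • m l ≤ ∑ l, a l • m l := by
  intro hdvd
  obtain ⟨k, hik, hjk⟩ := exists_eq_zero_and_eq_one_of_not_le (hsf j) hji
  have hle : ∑ l, b l * m l k ≤ ∑ l, a l * m l k := by
    simpa only [Finset.sum_apply, Pi.smul_apply, smul_eq_mul] using hdvd k
  have hlower : b j ≤ ∑ l, b l * m l k := by
    simpa only [hjk, mul_one] using
      single_le_sum_of_canonicallyOrdered (f := fun l => b l * m l k) (mem_univ j)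
  have hupper : ∑ l, a l * m l k + a i ≤ ∑ l, a l :=
    sum_mul_add_le_sum_of_le_one (fun l _ => Nat.zero_le (a l)) (fun l _ => hsf l k)
      (mem_univ i) hik
  lia

theorem not_dvd_of_coord_large {n q r : ℕ}
    (m : Fin q → Fin n → ℕ)
    (hsf : ∀ j k, m j k ≤ 1)
    (hmin : ∀ i j, i ≠ j → ¬ m i ≤ m j)
    (i j : Fin q) (hij : i ≠ j)
    (a b : Fin q → ℕ) (ha : ∑ k, a k = r) (hb : ∑ k, b k = r)
    (α : ℕ) (hα : α ≤ a i) (hbj : r - α < b j) :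
    ¬ mpow m b ≤ mpow m a := by
  rw [mpow_eq_sum_smul, mpow_eq_sum_smul]
  exact not_dvd_of_coord_large_general hsf (hmin j i hij.symm) (by lia)
end

section
/- Let r ≥ 1 and let m_1,…,m_q be square-free monomials forming a minimal generating set. Let i ≠ j be indices in {1,…,q} and let M be any monomial. If there exist a ∈ F^r_i ∪ G^r_i with m^a dividing M and b ∈ F^r_j ∪ G^r_j with m^b dividing M, then there exists c ∈ B^r with m^c dividing M. -/
/-!
STATEMENT 11: Let r ≥ 1 and let m_1,…,m_q be square-free monomials forming a minimal
generating set. Let i ≠ j and let M be any monomial. If there exist a ∈ F^r_i ∪ G^r_i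
with m^a ∣ M and b ∈ F^r_j ∪ G^r_j with m^b ∣ M, then there exists c ∈ B^r with m^c ∣ M.

Monomials are identified with their exponent vectors in ℕ^n; divisibility is the
componentwise order. Here s = ⌈r/2⌉ = (r+1)/2.
-/

open Finset

/-- The set `B^r`, with `s = ⌈r/2⌉ = (r+1)/2`. -/
def Bset (r q : ℕ) : Set (Fin q → ℕ) :=
  {a | (∑ k, a k = r) ∧ ∀ i, a i ≤ (r + 1) / 2}

/-- The set `F^r_i`, with `s = ⌈r/2⌉ = (r+1)/2`. -/
def Fset (r q : ℕ) (i : Fin q) : Set (Fin q → ℕ) :=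
  {a | (∑ k, a k = r) ∧ a i ≤ max (r - 1) ((r + 1) / 2) ∧
    ∀ j, j ≠ i → a j ≤ (r + 1) / 2}

/-- The set `G^r_i`. -/
def Gset (r q : ℕ) (i : Fin q) : Set (Fin q → ℕ) :=
  {a | (∑ k, a k = r) ∧ r - 1 ≤ a i}

open scoped Matrix

/-!
Suppose neither `a` nor `b` lies in `B^r`, so that `a i` and `b j` both exceed `s = ⌈r/2⌉`. Lower
`a i` to `s` and move the excess to the entry `j`, obtaining `c`. The entry `c i = s` leaves at
most `r - s ≤ s` for the others, so `c ∈ B^r`. The move raises the exponent of a variable only if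
`m_j` contains it and `m_i` does not; for such a variable the exponent in `m^c` is at most
`r - c i = r - s ≤ b j`, which is at most its exponent in `m^b`. Hence `m^c` divides the lcm of
`m^a` and `m^b`.
-/

theorem exists_add_single_eq {ι : Type*} [DecidableEq ι] {a : ι → ℕ} {i : ι} {s : ℕ} (h : s ≤ a i) :
    ∃ (d : ι → ℕ) (u : ℕ), d + Pi.single i u = a ∧ d i = s := by
  refine ⟨a - Pi.single i (a i - s), a i - s, tsub_add_cancel_of_le ?_, ?_⟩
  · exact update_le_iff.2 ⟨Nat.sub_le _ _, fun _ _ => Nat.zero_le _⟩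
  · simp [Nat.sub_sub_self h]

section

variable {ι : Type*} [Fintype ι]

theorem apply_le_of_sum_le_two_mul {c : ι → ℕ} {s : ℕ} {i : ι} (hi : c i = s)
    (hsum : ∑ l, c l ≤ 2 * s) (l : ι) : c l ≤ s := by
  rcases eq_or_ne l i with rfl | hl
  · exact hi.le
  · have hli : c l + c i ≤ ∑ k, c k := add_le_sum (by simp) (mem_univ l) (mem_univ i) hl
    omega

theorem dotProduct_add_apply_le_sum (d : ι → ℕ) {v : ι → ℕ} (hv : ∀ l, v l ≤ 1) {i : ι}
    (hi : v i = 0) : d ⬝ᵥ v + d i ≤ ∑ l, d l := by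
  classical
  calc d ⬝ᵥ v + d i = ∑ l, (d l * v l + if l = i then d l else 0) := by
        simp [dotProduct, sum_add_distrib]
    _ ≤ ∑ l, d l := sum_le_sum fun l _ => by
        split_ifs with hl
        · simp [hl, hi]
        · simpa using Nat.mul_le_mul_left (d l) (hv l)

theorem dotProduct_add_single_le_max [DecidableEq ι] {d b v : ι → ℕ} (hv : ∀ l, v l ≤ 1)
    {i j : ι} {u : ℕ} (h : ∑ l, d l + u ≤ d i + b j) :
    (d + Pi.single j u) ⬝ᵥ v ≤ max ((d + Pi.single i u) ⬝ᵥ v) (b ⬝ᵥ v) := by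
  simp only [add_dotProduct, single_dotProduct]
  by_cases hji : v j ≤ v i
  · exact le_max_of_le_left (by gcongr)
  · have hj : v j = 1 := by grind
    have hi : v i = 0 := by grind
    have hd : d ⬝ᵥ v + d i ≤ ∑ l, d l := dotProduct_add_apply_le_sum d hv hi
    have hb : b j * v j ≤ b ⬝ᵥ v :=
      single_le_sum (f := fun l => b l * v l) (fun _ _ => Nat.zero_le _) (mem_univ j)
    refine le_max_of_le_right ?_
    rw [hj, mul_one] at hb ⊢
    omega

/-- The rows of `A` are the exponent vectors of the `m_l`, and `a ᵥ* A` is that of `m^a`. -/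
theorem first_layers_connect_through_base_general {κ : Type*} {A : Matrix ι κ ℕ}
    (hA : ∀ l k, A l k ≤ 1) {r s : ℕ} (hrs : r ≤ 2 * s) {i j : ι} (hij : i ≠ j) {M : κ → ℕ}
    (hi : ∃ a : ι → ℕ, (∑ l, a l = r ∧ ∀ l, l ≠ i → a l ≤ s) ∧ a ᵥ* A ≤ M)
    (hj : ∃ b : ι → ℕ, (∑ l, b l = r ∧ ∀ l, l ≠ j → b l ≤ s) ∧ b ᵥ* A ≤ M) :
    ∃ c : ι → ℕ, (∑ l, c l = r ∧ ∀ l, c l ≤ s) ∧ c ᵥ* A ≤ M := by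
  classical
  obtain ⟨a, ⟨ha, has⟩, haM⟩ := hi
  obtain ⟨b, ⟨hb, hbs⟩, hbM⟩ := hj
  rcases le_or_gt (a i) s with hai | hai
  · exact ⟨a, ⟨ha, fun l => (eq_or_ne l i).elim (· ▸ hai) (has l)⟩, haM⟩
  rcases le_or_gt (b j) s with hbj | hbj
  · exact ⟨b, ⟨hb, fun l => (eq_or_ne l j).elim (· ▸ hbj) (hbs l)⟩, hbM⟩
  obtain ⟨d, u, rfl, hdi⟩ := exists_add_single_eq hai.le
  have hdu : ∑ l, d l + u = r := by simpa [sum_add_distrib] using ha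
  have hc : ∑ l, (d + Pi.single j u : ι → ℕ) l = r := by simpa [sum_add_distrib] using hdu
  have hdb : ∑ l, d l + u ≤ d i + b j := by omega
  refine ⟨d + Pi.single j u, ⟨hc, apply_le_of_sum_le_two_mul (i := i) ?_ (hc.trans_le hrs)⟩,
    fun k => ?_⟩
  · simp [hij, hdi]
  · exact (dotProduct_add_single_le_max (hA · k) hdb).trans (max_le (haM k) (hbM k))

end

theorem sum_eq_and_forall_ne_le_of_mem_Fset_union_Gset {r q : ℕ} {i : Fin q} {a : Fin q → ℕ}
    (ha : a ∈ Fset r q i ∪ Gset r q i) :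
    ∑ l, a l = r ∧ ∀ l, l ≠ i → a l ≤ (r + 1) / 2 := by
  rcases ha with ⟨hsum, -, hle⟩ | ⟨hsum, hge⟩
  · exact ⟨hsum, hle⟩
  · refine ⟨hsum, fun l hl => ?_⟩
    have hli : a l + a i ≤ ∑ k, a k := add_le_sum (by simp) (mem_univ l) (mem_univ i) hl
    omega

theorem first_layers_connect_through_base {n q r : ℕ} (hr : 1 ≤ r)
    (m : Fin q → Fin n → ℕ)
    (hsf : ∀ j k, m j k ≤ 1)
    (hmin : ∀ i j, i ≠ j → ¬ m i ≤ m j)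
    (i j : Fin q) (hij : i ≠ j) (M : Fin n → ℕ)
    (hA : ∃ a ∈ Fset r q i ∪ Gset r q i, mpow m a ≤ M)
    (hB : ∃ b ∈ Fset r q j ∪ Gset r q j, mpow m b ≤ M) :
    ∃ c ∈ Bset r q, mpow m c ≤ M :=
  first_layers_connect_through_base_general (A := Matrix.of m) hsf (by omega) hij
    (hA.imp fun _ => And.imp_left sum_eq_and_forall_ne_le_of_mem_Fset_union_Gset)
    (hB.imp fun _ => And.imp_left sum_eq_and_forall_ne_le_of_mem_Fset_union_Gset)
end

section
/- Let r, q ≥ 2 be integers, and set f = |F^r_1| and b = |B^r|. Then q·(f − b) = C(q+r−1, r) − q − b, where C(n,k) denotes the binomial coefficient. -/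
/-!
STATEMENT 13: Let r, q ≥ 2 and set f = |F^r_1| and b = |B^r|. Then
q·(f − b) = C(q+r−1, r) − q − b (an identity of integers).
-/

open Finset

/-!
Since `r ≤ 2s + 1`, two entries of a tuple with sum `r` cannot both exceed `s = ⌈r/2⌉`. Hence the
tuples outside `B^r` fall into `q` disjoint classes according to the position of their unique large
entry, and these classes have the same size `ℓ`, so `C(q+r-1, r) = b + q ℓ`. On the other hand
`F^r_i` together with the tuple `r eᵢ` consists of `B^r` and the class of position `i`, so
`f + 1 = b + ℓ`.
-/

lemma apply_add_apply_le_sum {ι : Type*} [Fintype ι] (a : ι → ℕ) {i j : ι} (hij : i ≠ j) :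
    a i + a j ≤ ∑ k, a k :=
  add_le_sum (fun k _ => Nat.zero_le (a k)) (mem_univ i) (mem_univ j) hij

section Antidiagonal

variable {ι : Type*} [DecidableEq ι]

lemma card_piAntidiag_nat_eq_choose (t : Finset ι) (n : ℕ) :
    #(piAntidiag t n) = (#t + n - 1).choose n := by
  rw [← card_finsuppAntidiag_nat_eq_choose]
  simp [finsuppAntidiag]

lemma filter_le_apply_piAntidiag_univ [Fintype ι] (n : ℕ) (i : ι) :
    {a ∈ piAntidiag (univ : Finset ι) n | n ≤ a i} = {Pi.single i n} := by
  ext a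
  simp only [mem_filter, mem_piAntidiag, mem_univ, implies_true, and_true, mem_singleton]
  constructor
  · rintro ⟨rfl, hi⟩
    ext j
    obtain rfl | hji := eq_or_ne j i
    · rw [Pi.single_eq_same]
      exact (single_le_sum_of_canonicallyOrdered (mem_univ j)).antisymm hi
    · rw [Pi.single_eq_of_ne hji]
      have hpair : a j + a i ≤ univ.sum a := apply_add_apply_le_sum a hji
      omega
  · rintro rfl
    simp

end Antidiagonal

section Tuples

variable (ι : Type*) [Fintype ι] [DecidableEq ι]

/-- The tuples with sum `r` all of whose entries are at most `s`: the set `B^r` for an arbitrary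
index type and an arbitrary threshold, as a finset. -/
def boundedTuples (r s : ℕ) : Finset (ι → ℕ) :=
  {a ∈ piAntidiag univ r | ∀ j, a j ≤ s}

variable {ι}

/-- The tuples with sum `r` whose entries off position `i` are at most `s`. Those with `a i < r`
form the analogue of `F^r_i`, since `max (r - 1) s = r - 1` for `s < r`. -/
def boundedOffTuples (r s : ℕ) (i : ι) : Finset (ι → ℕ) :=
  {a ∈ piAntidiag univ r | ∀ j ≠ i, a j ≤ s}

/-- The tuples with sum `r` whose `i`-th entry exceeds `s`. -/
def largeTuples (r s : ℕ) (i : ι) : Finset (ι → ℕ) :=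
  {a ∈ piAntidiag univ r | s < a i}

variable {r s : ℕ}

lemma card_largeTuples_eq (r s : ℕ) (i j : ι) : #(largeTuples r s i) = #(largeTuples r s j) := by
  refine card_equiv ((Equiv.swap i j).arrowCongr (Equiv.refl ℕ)) fun a => ?_
  have hsum : ∑ k, (Equiv.swap i j).arrowCongr (Equiv.refl ℕ) a k = ∑ k, a k :=
    (Equiv.swap i j).symm.sum_comp a
  simp only [largeTuples, mem_filter, mem_piAntidiag, hsum]
  simp

lemma apply_le_of_mem_largeTuples (hrs : r ≤ 2 * s + 1) {i j : ι} (hji : j ≠ i) {a : ι → ℕ}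
    (ha : a ∈ largeTuples r s i) : a j ≤ s := by
  obtain ⟨hsum, hi⟩ : ∑ k, a k = r ∧ s < a i := by simpa [largeTuples] using ha
  have hpair := apply_add_apply_le_sum a hji
  omega

lemma pairwise_disjoint_largeTuples (hrs : r ≤ 2 * s + 1) :
    Pairwise (Function.onFun Disjoint (largeTuples (ι := ι) r s)) := fun _ _ hij =>
  disjoint_left.mpr fun _ hi hj =>
    (mem_filter.mp hj).2.not_ge (apply_le_of_mem_largeTuples hrs hij.symm hi)

lemma filter_not_bounded_eq_biUnion_largeTuples (r s : ℕ) :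
    {a ∈ piAntidiag (univ : Finset ι) r | ¬ ∀ j, a j ≤ s} =
      univ.biUnion (largeTuples r s) := by
  ext a
  simp [largeTuples]

lemma card_boundedTuples_add_card_mul_card_largeTuples (hrs : r ≤ 2 * s + 1) (i : ι) :
    #(boundedTuples ι r s) + Fintype.card ι * #(largeTuples r s i) =
      (Fintype.card ι + r - 1).choose r := by
  have hlarge : #(univ.biUnion (largeTuples (ι := ι) r s)) =
      Fintype.card ι * #(largeTuples r s i) := by
    rw [card_biUnion ((pairwise_disjoint_largeTuples hrs).set_pairwise _),
      sum_congr rfl fun j _ => card_largeTuples_eq r s j i, sum_const, card_univ, smul_eq_mul]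
  rw [← hlarge, ← filter_not_bounded_eq_biUnion_largeTuples, boundedTuples,
    card_filter_add_card_filter_not, card_piAntidiag_nat_eq_choose, card_univ]

lemma filter_apply_le_boundedOffTuples (r s : ℕ) (i : ι) :
    {a ∈ boundedOffTuples r s i | a i ≤ s} = boundedTuples ι r s := by
  ext a
  simp only [boundedOffTuples, boundedTuples, mem_filter]
  grind

lemma filter_not_apply_le_boundedOffTuples (hrs : r ≤ 2 * s + 1) (i : ι) :
    {a ∈ boundedOffTuples r s i | ¬ a i ≤ s} = largeTuples r s i := by
  ext a
  have hoff : a ∈ largeTuples r s i → ∀ j ≠ i, a j ≤ s := fun ha _ hji =>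
    apply_le_of_mem_largeTuples hrs hji ha
  simp only [boundedOffTuples, largeTuples, mem_filter, not_le] at hoff ⊢
  tauto

lemma filter_not_apply_lt_boundedOffTuples (r s : ℕ) (i : ι) :
    {a ∈ boundedOffTuples r s i | ¬ a i < r} = {Pi.single i r} := by
  simp_rw [boundedOffTuples, filter_filter, and_comm, ← filter_filter, not_lt,
    filter_le_apply_piAntidiag_univ]
  simp +contextual [filter_singleton]

lemma card_filter_apply_lt_boundedOffTuples_add_one (hrs : r ≤ 2 * s + 1) (i : ι) :
    #{a ∈ boundedOffTuples r s i | a i < r} + 1 =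
      #(boundedTuples ι r s) + #(largeTuples r s i) := by
  calc #{a ∈ boundedOffTuples r s i | a i < r} + 1
      = #(boundedOffTuples r s i) := by
        rw [← card_singleton (Pi.single i r : ι → ℕ), ← filter_not_apply_lt_boundedOffTuples r s,
          card_filter_add_card_filter_not]
    _ = #(boundedTuples ι r s) + #(largeTuples r s i) := by
        rw [← filter_apply_le_boundedOffTuples r s i, ← filter_not_apply_le_boundedOffTuples hrs,
          card_filter_add_card_filter_not]

theorem f_formula_general (hrs : r ≤ 2 * s + 1) (i : ι) :
    (Fintype.card ι : ℤ) * (#{a ∈ boundedOffTuples r s i | a i < r} - #(boundedTuples ι r s)) =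
      (Fintype.card ι + r - 1).choose r - Fintype.card ι - #(boundedTuples ι r s) := by
  have htotal := congrArg (Nat.cast (R := ℤ))
    (card_boundedTuples_add_card_mul_card_largeTuples hrs i)
  have hface := congrArg (Nat.cast (R := ℤ))
    (card_filter_apply_lt_boundedOffTuples_add_one hrs i)
  push_cast at htotal hface
  linear_combination (Fintype.card ι : ℤ) * hface + htotal

end Tuples

lemma Bset_eq_coe_boundedTuples (r q : ℕ) :
    Bset r q = boundedTuples (Fin q) r ((r + 1) / 2) := by
  ext a
  simp [Bset, boundedTuples]

lemma Fset_eq_coe_filter_boundedOffTuples {r q : ℕ} (hr : 2 ≤ r) (i : Fin q) :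
    Fset r q i = ({a ∈ boundedOffTuples r ((r + 1) / 2) i | a i < r} : Finset (Fin q → ℕ)) := by
  ext a
  have hbound : a i ≤ max (r - 1) ((r + 1) / 2) ↔ a i < r := by omega
  simp only [Fset, boundedOffTuples, hbound, Set.mem_ofPred_eq, coe_filter, mem_filter,
    mem_piAntidiag, mem_univ, implies_true, and_true]
  tauto

theorem f_formula (r q : ℕ) (hr : 2 ≤ r) (hq : 2 ≤ q) :
    (q : ℤ) * (((Fset r q ⟨0, by omega⟩).ncard : ℤ) - ((Bset r q).ncard : ℤ)) =
      ((q + r - 1).choose r : ℤ) - (q : ℤ) - ((Bset r q).ncard : ℤ) := by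
  simpa only [Fset_eq_coe_filter_boundedOffTuples hr, Bset_eq_coe_boundedTuples,
    Set.ncard_coe_finset, Fintype.card_fin] using
    f_formula_general (s := (r + 1) / 2) (by omega) (⟨0, by omega⟩ : Fin q)
end

section
/- Let r ≥ 2 and q ≥ 1 be integers, and set f = |F^r_1| and b = |B^r|. For every t ≥ 0, the number of faces of the simplicial complex L^r_q having exactly t+1 vertices equals q·(C(q−1,t) + C(f,t+1) − C(b,t+1)) + C(b,t+1), where C(n,k) denotes the binomial coefficient. -/
/-!
STATEMENT 14: Let r ≥ 2, q ≥ 1, f = |F^r_1|, b = |B^r|. For every t ≥ 0, the number of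
faces of L^r_q with exactly t+1 vertices equals
q·(C(q−1,t) + C(f,t+1) − C(b,t+1)) + C(b,t+1) (an identity of integers).
-/

open Finset

/-- The faces of the simplicial complex `L^r_q`: all (finite) subsets of the sets
`F^r_1,…,F^r_q, G^r_1,…,G^r_q`. -/
def LFaces (r q : ℕ) : Set (Finset (Fin q → ℕ)) :=
  {σ | ∃ i : Fin q, (σ : Set (Fin q → ℕ)) ⊆ Fset r q i ∨ (σ : Set (Fin q → ℕ)) ⊆ Gset r q i}

/-!
Write `x i` for the vertex `r • e_i`. Only `G i` contains it, and `G i` without `x i` lies in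
`F i`. So a face through some `x i` is `x i` together with an arbitrary subset of the remaining
`q - 1` points of `G i`, and every other face lies in some `F i`. The sets `F i` form a sunflower
with kernel `B`, hence so do their families of `n`-element subsets, which makes the latter easy to
count.
-/

section Counting

variable {α ι : Type*} [DecidableEq α]

theorem card_biUnion_of_inter_subset {s : Finset ι} (hs : s.Nonempty) {K : Finset α}
    {S : ι → Finset α} (hK : ∀ i ∈ s, K ⊆ S i)
    (hS : (s : Set ι).Pairwise fun i j => S i ∩ S j ⊆ K) :
    #(s.biUnion S) = #K + ∑ i ∈ s, #(S i \ K) := by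
  have hdecomp : s.biUnion S = K ∪ s.biUnion fun i => S i \ K := by
    obtain ⟨i, hi⟩ := hs
    have hKS : K ⊆ s.biUnion S := (hK i hi).trans (subset_biUnion_of_mem S hi)
    rw [← sup_eq_biUnion _ fun i => S i \ K, Finset.sup_sdiff_right, sup_eq_biUnion,
      union_sdiff_of_subset hKS]
  have hdisj : (s : Set ι).PairwiseDisjoint fun i => S i \ K := fun i hi j hj hij =>
    disjoint_left.2 fun a hai haj =>
      (mem_sdiff.1 hai).2 (hS hi hj hij (mem_inter.2 ⟨(mem_sdiff.1 hai).1, (mem_sdiff.1 haj).1⟩))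
  rw [hdecomp, card_union_of_disjoint, card_biUnion hdisj]
  exact (disjoint_biUnion_right _ _ _).2 fun i _ => disjoint_sdiff

theorem card_biUnion_powersetCard_of_inter_subset {s : Finset ι} (hs : s.Nonempty)
    {B : Finset α} {F : ι → Finset α} (hB : ∀ i ∈ s, B ⊆ F i)
    (hF : (s : Set ι).Pairwise fun i j => F i ∩ F j ⊆ B) (n : ℕ) :
    (#(s.biUnion fun i => (F i).powersetCard n) : ℤ) =
      (#B).choose n + ∑ i ∈ s, ((#(F i)).choose n - (#B).choose n : ℤ) := by
  have hinter : (s : Set ι).Pairwise fun i j =>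
      (F i).powersetCard n ∩ (F j).powersetCard n ⊆ B.powersetCard n := by
    intro i hi j hj hij σ hσ
    simp only [mem_inter, mem_powersetCard] at hσ ⊢
    exact ⟨(subset_inter hσ.1.1 hσ.2.1).trans (hF hi hj hij), hσ.1.2⟩
  rw [card_biUnion_of_inter_subset hs (fun i hi => powersetCard_mono (hB i hi)) hinter]
  rw [Nat.cast_add, Nat.cast_sum, card_powersetCard]
  congr 1
  refine sum_congr rfl fun i hi => ?_
  rw [cast_card_sdiff (powersetCard_mono (hB i hi)), card_powersetCard, card_powersetCard]

theorem card_filter_mem_powersetCard_succ {s : Finset α} {x : α} (hx : x ∈ s) (n : ℕ) :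
    #{σ ∈ s.powersetCard (n + 1) | x ∈ σ} = (#s - 1).choose n := by
  simpa using card_filter_powersetCard_subset {x} s (n + 1) (by simpa using hx) (by simp)

theorem card_biUnion_filter_mem_powersetCard_succ {s : Finset ι} {G : ι → Finset α} {x : ι → α}
    (hx : ∀ i ∈ s, ∀ j ∈ s, x i ∈ G j ↔ i = j) (n : ℕ) :
    #(s.biUnion fun i => {σ ∈ (G i).powersetCard (n + 1) | x i ∈ σ}) =
      ∑ i ∈ s, (#(G i) - 1).choose n := by
  rw [card_biUnion]
  · exact sum_congr rfl fun i hi => card_filter_mem_powersetCard_succ ((hx i hi i hi).2 rfl) n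
  · refine fun i hi j hj hij => disjoint_left.2 fun σ hσi hσj => hij ?_
    simp only [mem_filter, mem_powersetCard] at hσi hσj
    exact (hx i hi j hj).1 (hσj.1.1 hσi.2)

theorem disjoint_biUnion_powersetCard_biUnion_filter_mem {s t : Finset ι} {F G : ι → Finset α}
    {x : ι → α} (hxF : ∀ i ∈ s, ∀ j ∈ t, x j ∉ F i) (n : ℕ) :
    Disjoint (s.biUnion fun i => (F i).powersetCard n)
      (t.biUnion fun j => {σ ∈ (G j).powersetCard n | x j ∈ σ}) := by
  simp only [disjoint_biUnion_left, disjoint_biUnion_right]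
  refine fun j hj i hi => disjoint_left.2 fun σ hσF hσG => hxF i hi j hj ?_
  exact (mem_powersetCard.1 hσF).1 (mem_filter.1 hσG).2

theorem subset_or_subset_iff_of_erase_subset {F G σ : Finset α} {x : α} (hGF : G.erase x ⊆ F) :
    σ ⊆ F ∨ σ ⊆ G ↔ σ ⊆ F ∨ σ ⊆ G ∧ x ∈ σ := by
  refine ⟨?_, Or.imp_right And.left⟩
  rintro (hF | hG)
  · exact .inl hF
  · by_cases hx : x ∈ σ
    · exact .inr ⟨hG, hx⟩
    · exact .inl ((subset_erase.2 ⟨hG, hx⟩).trans hGF)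

theorem setOf_subset_or_subset_and_card_eq [Fintype ι] {F G : ι → Finset α} {x : ι → α}
    (hGF : ∀ i, (G i).erase (x i) ⊆ F i) (n : ℕ) :
    {σ : Finset α | (∃ i, σ ⊆ F i ∨ σ ⊆ G i) ∧ #σ = n} =
      ↑((univ.biUnion fun i => (F i).powersetCard n) ∪
        univ.biUnion fun i => {σ ∈ (G i).powersetCard n | x i ∈ σ}) := by
  ext σ
  simp only [subset_or_subset_iff_of_erase_subset (hGF _), Set.mem_ofPred_eq, coe_union,
    Set.mem_union, mem_coe, mem_biUnion, mem_filter, mem_powersetCard, mem_univ]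
  grind

end Counting

theorem ncard_setOf_subset_or_subset_and_card_eq {α ι : Type*} [Fintype ι] [Nonempty ι]
    {B : Set α} {F G : ι → Set α} {x : ι → α} (hfin : ∀ i, (F i).Finite)
    (hBF : ∀ i, B ⊆ F i) (hFF : Pairwise fun i j => F i ∩ F j ⊆ B)
    (hGF : ∀ i, G i \ {x i} ⊆ F i) (hxF : ∀ i j, x i ∉ F j) (hxG : ∀ i j, x i ∈ G j ↔ i = j)
    (n : ℕ) :
    ({σ : Finset α | (∃ i, (σ : Set α) ⊆ F i ∨ (σ : Set α) ⊆ G i) ∧ #σ = n + 1}.ncard : ℤ) =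
      B.ncard.choose (n + 1) +
        ∑ i, ((F i).ncard.choose (n + 1) - B.ncard.choose (n + 1) : ℤ) +
        ∑ i, (((G i).ncard - 1).choose n : ℤ) := by
  classical
  have hBfin : B.Finite := (hfin (Classical.arbitrary ι)).subset (hBF _)
  have hGfin : ∀ i, (G i).Finite := fun i =>
    ((hfin i).subset (hGF i)).of_sdiff (Set.finite_singleton _)
  lift B to Finset α using hBfin
  lift F to ι → Finset α using hfin
  lift G to ι → Finset α using hGfin
  simp only [← coe_inter, ← coe_singleton, ← coe_sdiff, coe_subset, sdiff_singleton_eq_erase,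
    mem_coe, Set.ncard_coe_finset] at hBF hFF hGF hxF hxG ⊢
  rw [setOf_subset_or_subset_and_card_eq hGF, Set.ncard_coe_finset,
    card_union_of_disjoint
      (disjoint_biUnion_powersetCard_biUnion_filter_mem (fun i _ j _ => hxF j i) _), Nat.cast_add,
    card_biUnion_powersetCard_of_inter_subset univ_nonempty (fun i _ => hBF i)
      (fun i _ j _ hij => hFF hij),
    card_biUnion_filter_mem_powersetCard_succ (fun i _ j _ => hxG i j), Nat.cast_sum]

section Compositions

variable {ι : Type*} [Fintype ι]

theorem coe_piAntidiag_univ [DecidableEq ι] (n : ℕ) :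
    (piAntidiag (univ : Finset ι) n : Set (ι → ℕ)) = {a | ∑ k, a k = n} := by
  ext a
  simp

theorem finite_setOf_sum_eq (n : ℕ) : {a : ι → ℕ | ∑ k, a k = n}.Finite := by
  classical
  exact coe_piAntidiag_univ (ι := ι) n ▸ finite_toSet _

theorem ncard_setOf_sum_eq (n : ℕ) :
    {a : ι → ℕ | ∑ k, a k = n}.ncard = (Fintype.card ι).multichoose n := by
  classical
  rw [← coe_piAntidiag_univ, Set.ncard_coe_finset, ← map_sym_eq_piAntidiag, card_map, sym_univ,
    card_univ, Sym.card_sym_eq_multichoose]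

theorem image_single_add_setOf_sum_eq [DecidableEq ι] (i : ι) (m n : ℕ) :
    (Pi.single i m + ·) '' {a : ι → ℕ | ∑ k, a k = n} = {a | ∑ k, a k = m + n ∧ m ≤ a i} := by
  ext a
  constructor
  · rintro ⟨b, rfl, rfl⟩
    simp [sum_add_distrib]
  · rintro ⟨hsum, hle⟩
    have hsingle : Pi.single i m ≤ a := update_le_iff.2 ⟨hle, fun _ _ => Nat.zero_le _⟩
    obtain ⟨b, rfl⟩ := exists_add_of_le hsingle
    refine ⟨b, ?_, rfl⟩
    simpa [sum_add_distrib] using hsum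

theorem ncard_setOf_sum_eq_and_le (i : ι) (m n : ℕ) :
    {a : ι → ℕ | ∑ k, a k = m + n ∧ m ≤ a i}.ncard = (Fintype.card ι).multichoose n := by
  classical
  rw [← image_single_add_setOf_sum_eq, Set.ncard_image_of_injective _ (add_right_injective _),
    ncard_setOf_sum_eq]

theorem eq_single_of_sum_eq [DecidableEq ι] {a : ι → ℕ} {i : ι} (h : ∑ k, a k = a i) :
    a = Pi.single i (a i) := by
  funext j
  obtain rfl | hji := eq_or_ne j i
  · rw [Pi.single_eq_same]
  · have hadd : a j + a i ≤ a i :=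
      (add_le_sum (fun _ _ => Nat.zero_le _) (mem_univ j) (mem_univ i) hji).trans h.le
    rw [Pi.single_eq_of_ne hji]
    omega

end Compositions

section Facets

variable {r q : ℕ} {i j : Fin q} {a : Fin q → ℕ}

theorem finite_Fset (r : ℕ) (i : Fin q) : (Fset r q i).Finite :=
  (finite_setOf_sum_eq r).subset fun _ ha => ha.1

theorem Bset_subset_Fset (r : ℕ) (i : Fin q) : Bset r q ⊆ Fset r q i :=
  fun _ ha => ⟨ha.1, le_max_of_le_right (ha.2 i), fun j _ => ha.2 j⟩

theorem Fset_inter_Fset_subset_Bset (hij : i ≠ j) : Fset r q i ∩ Fset r q j ⊆ Bset r q := by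
  rintro a ⟨hi, hj⟩
  refine ⟨hi.1, fun k => ?_⟩
  by_cases hk : k = i
  · exact hj.2.2 k (hk ▸ hij)
  · exact hi.2.2 k hk

theorem comp_perm_mem_Fset (σ : Equiv.Perm (Fin q)) :
    a ∘ σ ∈ Fset r q i ↔ a ∈ Fset r q (σ i) := by
  simp only [Fset, Set.mem_ofPred_eq, Function.comp_apply, Equiv.sum_comp]
  rw [← σ.forall_congr_right (q := fun k => k ≠ σ i → a k ≤ (r + 1) / 2)]
  simp only [ne_eq, σ.apply_eq_iff_eq]

theorem ncard_Fset_eq (r : ℕ) (i j : Fin q) : (Fset r q i).ncard = (Fset r q j).ncard := by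
  refine Set.ncard_congr' (((Equiv.swap i j).arrowCongr (Equiv.refl ℕ)).subtypeEquiv fun a => ?_)
  change a ∈ Fset r q i ↔ a ∘ Equiv.swap i j ∈ Fset r q j
  rw [comp_perm_mem_Fset, Equiv.swap_apply_right]

theorem ncard_Gset (hr : 1 ≤ r) (i : Fin q) : (Gset r q i).ncard = q := by
  have h := ncard_setOf_sum_eq_and_le i (r - 1) 1
  rwa [Nat.sub_add_cancel hr, Fintype.card_fin, Nat.multichoose_one_right] at h

theorem single_mem_Gset_iff (hr : 2 ≤ r) : Pi.single i r ∈ Gset r q j ↔ i = j := by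
  constructor
  · rintro ⟨-, hle⟩
    by_contra hij
    rw [Pi.single_eq_of_ne' hij] at hle
    omega
  · rintro rfl
    exact ⟨by simp, by simp⟩

theorem single_notMem_Fset (hr : 2 ≤ r) : Pi.single i r ∉ Fset r q j := by
  rintro ⟨-, hj, hne⟩
  obtain rfl | hij := eq_or_ne i j
  · rw [Pi.single_eq_same] at hj
    omega
  · have hi := hne i hij
    rw [Pi.single_eq_same] at hi
    omega

theorem Gset_sdiff_singleton_subset_Fset (r : ℕ) (i : Fin q) :
    Gset r q i \ {Pi.single i r} ⊆ Fset r q i := by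
  rintro a ⟨⟨hsum, hi⟩, hne⟩
  have hlt : a i < r := by
    refine lt_of_le_of_ne (hsum ▸ single_le_sum (fun _ _ => Nat.zero_le _) (mem_univ i)) ?_
    rintro rfl
    exact hne (eq_single_of_sum_eq hsum)
  refine ⟨hsum, le_max_of_le_left (by omega), fun j hji => ?_⟩
  have hadd : a i + a j ≤ r :=
    hsum ▸ add_le_sum (fun _ _ => Nat.zero_le _) (mem_univ i) (mem_univ j) hji.symm
  omega

end Facets

theorem face_count_Lrq (r q : ℕ) (hr : 2 ≤ r) (hq : 1 ≤ q) (t : ℕ) :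
    (({σ | σ ∈ LFaces r q ∧ σ.card = t + 1} : Set (Finset (Fin q → ℕ))).ncard : ℤ) =
      (q : ℤ) * (((q - 1).choose t : ℤ) +
          (((Fset r q ⟨0, by omega⟩).ncard.choose (t + 1) : ℤ)) -
          (((Bset r q).ncard.choose (t + 1) : ℤ))) +
        (((Bset r q).ncard.choose (t + 1) : ℤ)) := by
  have : Nonempty (Fin q) := ⟨⟨0, hq⟩⟩
  have hcount := ncard_setOf_subset_or_subset_and_card_eq (finite_Fset (q := q) r)
    (Bset_subset_Fset r) (fun _ _ => Fset_inter_Fset_subset_Bset)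
    (Gset_sdiff_singleton_subset_Fset r) (fun _ _ => single_notMem_Fset hr)
    (fun _ _ => single_mem_Gset_iff hr) t
  have hF : ∀ i, (Fset r q i).ncard = (Fset r q ⟨0, hq⟩).ncard := fun i => ncard_Fset_eq r i _
  have hG : ∀ i, (Gset r q i).ncard = q := ncard_Gset (by omega)
  simp only [hF, hG, sum_const, card_univ, Fintype.card_fin, nsmul_eq_mul] at hcount
  refine hcount.trans ?_
  ring
end

section
/- Let q ≥ 3 and r = 2, and let ε_1,…,ε_q be the extremal generators. For every nonempty face σ of the simplicial complex L^2_q and every c ∈ N^2_q: ε^c divides lcm{ε^a : a ∈ σ} if and only if c ∈ σ. -/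
/-!
STATEMENT 19: Let q ≥ 3 and r = 2, and let ε_1,…,ε_q be the extremal generators. For
every nonempty face σ of the simplicial complex L^2_q and every c ∈ N^2_q:
ε^c divides lcm{ε^a : a ∈ σ} if and only if c ∈ σ.

Monomials are identified with their exponent vectors; divisibility is the componentwise
order and lcm is the componentwise maximum. ε^a has exponent ∑_{j ∈ A} a_j at x_A.
-/

open Finset

/-- The exponent vector of `ε^a`: its exponent at `x_A` is `∑_{j ∈ A} a_j`. -/
def epow (q : ℕ) (a : Fin q → ℕ) : {A : Finset (Fin q) // A.Nonempty} → ℕ :=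
  fun A => ∑ j ∈ A.1, a j

/-!
A divisor `ε^c` of the lcm satisfies, for every index set `A`, the inequality
`∑_{j ∈ A} c_j ≤ ∑_{j ∈ A} a_j` for some `a ∈ σ` depending on `A`. As all vectors have the same
total, it is enough to choose `A` so that the resulting `a` dominates `c` in every coordinate.

If `σ` consists of 0-1 vectors, then `A = supp c` works: there `a_j ≤ 1 ≤ c_j`, so the inequality of
sums forces `a = c` on `A`. If instead every `a ∈ σ` has `a_i ≥ r - 1`, then the complement of `{i}`
shows that `c` has mass at most one off `i`. Hence `c = r e_i`, and `A = {i}` works, or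
`c = (r - 1) e_i + e_k` with `k ≠ i`, and `A = {k}` works.
-/

theorem eq_of_le_of_sum_eq {ι M : Type*} [Fintype ι] [AddCommMonoid M] [PartialOrder M]
    [IsOrderedCancelAddMonoid M] {c a : ι → M} (hle : c ≤ a) (hsum : ∑ j, c j = ∑ j, a j) :
    c = a :=
  hle.eq_of_not_lt fun hlt => (Fintype.sum_strictMono hlt).ne hsum

theorem mem_of_exists_le_of_forall_sum_eq {ι M : Type*} [Fintype ι] [AddCommMonoid M]
    [PartialOrder M] [IsOrderedCancelAddMonoid M] {c : ι → M} {σ : Set (ι → M)} {r : M}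
    (hσ : ∀ a ∈ σ, ∑ j, a j = r) (hc : ∑ j, c j = r) (h : ∃ a ∈ σ, c ≤ a) : c ∈ σ := by
  obtain ⟨a, ha, hca⟩ := h
  rwa [eq_of_le_of_sum_eq hca (hc.trans (hσ a ha).symm)]

/-- Divisibility of `ε^c` in `lcm {ε^a : a ∈ σ}`, read off one variable `x_A` at a time.
Including `A = ∅` only has the effect of forcing `σ` to be nonempty. -/
def ExtremalDvdLcm {ι : Type*} (c : ι → ℕ) (σ : Set (ι → ℕ)) : Prop :=
  ∀ A : Finset ι, ∃ a ∈ σ, ∑ j ∈ A, c j ≤ ∑ j ∈ A, a j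

namespace ExtremalDvdLcm

variable {ι : Type*} {c : ι → ℕ} {σ : Set (ι → ℕ)}

theorem of_mem (hc : c ∈ σ) : ExtremalDvdLcm c σ :=
  fun _ => ⟨c, hc, le_rfl⟩

theorem exists_apply_le (h : ExtremalDvdLcm c σ) (j : ι) : ∃ a ∈ σ, c j ≤ a j := by
  simpa only [sum_singleton] using h {j}

theorem exists_le_of_forall_le_one [Finite ι] (h : ExtremalDvdLcm c σ)
    (hσ : ∀ a ∈ σ, ∀ j, a j ≤ 1) : ∃ a ∈ σ, c ≤ a := by
  let support : Finset ι := (Set.toFinite (Function.support c)).toFinset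
  have hmem {j : ι} : j ∈ support ↔ c j ≠ 0 := Set.Finite.mem_toFinset _
  obtain ⟨a, ha, hsum⟩ := h support
  have hac : ∀ j ∈ support, a j ≤ c j := fun j hj =>
    (hσ a ha j).trans (Nat.one_le_iff_ne_zero.2 (hmem.1 hj))
  have heq : ∀ j ∈ support, a j = c j :=
    (sum_eq_sum_iff_of_le hac).1 ((sum_le_sum hac).antisymm hsum)
  refine ⟨a, ha, fun j => ?_⟩
  by_cases hj : c j = 0
  · exact hj.trans_le (Nat.zero_le _)
  · exact (heq j (hmem.2 hj)).ge

variable [Fintype ι] {r : ℕ}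

theorem sum_erase_le_one [DecidableEq ι] (h : ExtremalDvdLcm c σ) {i : ι}
    (hσ : ∀ a ∈ σ, ∑ j, a j = r) (hi : ∀ a ∈ σ, r - 1 ≤ a i) :
    ∑ j ∈ univ.erase i, c j ≤ 1 := by
  obtain ⟨a, ha, hca⟩ := h (univ.erase i)
  have hsplit := add_sum_erase univ a (mem_univ i)
  have hsum := hσ a ha
  have hai := hi a ha
  omega

theorem exists_le_of_forall_sub_one_le_apply (h : ExtremalDvdLcm c σ) {i : ι}
    (hσ : ∀ a ∈ σ, ∑ j, a j = r) (hi : ∀ a ∈ σ, r - 1 ≤ a i) (hc : ∑ j, c j = r) :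
    ∃ a ∈ σ, c ≤ a := by
  classical
  by_cases hzero : ∀ k ≠ i, c k = 0
  · obtain ⟨a, ha, hca⟩ := h.exists_apply_le i
    refine ⟨a, ha, fun j => ?_⟩
    obtain rfl | hj := eq_or_ne j i
    · exact hca
    · exact (hzero j hj).trans_le (Nat.zero_le _)
  · push Not at hzero
    obtain ⟨k, hki, hk⟩ := hzero
    have hk_mem : k ∈ univ.erase i := mem_erase.2 ⟨hki, mem_univ k⟩
    have hone : c k + ∑ j ∈ (univ.erase i).erase k, c j ≤ 1 :=
      (add_sum_erase _ c hk_mem).trans_le (h.sum_erase_le_one hσ hi)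
    have hrest : ∀ j ≠ i, j ≠ k → c j = 0 := fun j hji hjk =>
      sum_eq_zero_iff.1 (by omega) j (mem_erase.2 ⟨hjk, mem_erase.2 ⟨hji, mem_univ j⟩⟩)
    have hci : c i ≤ r - 1 := by
      have hsplit : c i + ∑ j ∈ univ.erase i, c j = r :=
        (add_sum_erase univ c (mem_univ i)).trans hc
      have hck : c k ≤ ∑ j ∈ univ.erase i, c j := single_le_sum_of_canonicallyOrdered hk_mem
      omega
    obtain ⟨a, ha, hca⟩ := h.exists_apply_le k
    refine ⟨a, ha, fun j => ?_⟩
    obtain rfl | hji := eq_or_ne j i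
    · exact hci.trans (hi a ha)
    obtain rfl | hjk := eq_or_ne j k
    · exact hca
    · exact (hrest j hji hjk).trans_le (Nat.zero_le _)

end ExtremalDvdLcm

theorem epow_le_sup_iff {q : ℕ} {σ : Finset (Fin q → ℕ)} (hne : σ.Nonempty) {c : Fin q → ℕ} :
    (epow q c ≤ fun A => σ.sup fun a => epow q a A) ↔ ExtremalDvdLcm c (σ : Set (Fin q → ℕ)) := by
  constructor
  · intro h A
    obtain rfl | hA := A.eq_empty_or_nonempty
    · obtain ⟨a, ha⟩ := hne
      exact ⟨a, ha, le_rfl⟩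
    · obtain ⟨a, ha, hsup⟩ := exists_mem_eq_sup σ hne fun a => epow q a ⟨A, hA⟩
      exact ⟨a, ha, (h ⟨A, hA⟩).trans_eq hsup⟩
  · intro h A
    obtain ⟨a, ha, hca⟩ := h A.1
    exact hca.trans (le_sup (f := fun a => epow q a A) ha)

/-- The exponent vectors `a` of total `r` for which `ε_1^{a_1}⋯ε_q^{a_q}` is a product of `r`
distinct extremal generators. For `r = 2` this is `B^2`, and each `F^2_i` equals it. -/
def zeroOneSet (r q : ℕ) : Set (Fin q → ℕ) :=
  {a | ∑ j, a j = r ∧ ∀ j, a j ≤ 1}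

theorem Fset_two (q : ℕ) (i : Fin q) : Fset 2 q i = zeroOneSet 2 q := by
  ext a
  refine and_congr_right fun _ => ⟨fun ⟨hi, hoff⟩ j => ?_, fun h => ⟨h i, fun j _ => h j⟩⟩
  obtain rfl | hj := eq_or_ne j i
  · exact hi
  · exact hoff j hj

theorem extremal_dvd_lcm_iff_mem_general (r q : ℕ) (σ : Finset (Fin q → ℕ))
    (hσ : (σ : Set (Fin q → ℕ)) ⊆ zeroOneSet r q ∨
      ∃ i : Fin q, (σ : Set (Fin q → ℕ)) ⊆ Gset r q i)
    (hne : σ.Nonempty) (c : Fin q → ℕ) (hc : ∑ i, c i = r) :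
    (epow q c ≤ fun A => σ.sup fun a => epow q a A) ↔ c ∈ σ := by
  rw [epow_le_sup_iff hne]
  refine ⟨fun h => ?_, ExtremalDvdLcm.of_mem⟩
  obtain hB | ⟨i, hG⟩ := hσ
  · exact mem_of_exists_le_of_forall_sum_eq (fun a ha => (hB ha).1) hc
      (h.exists_le_of_forall_le_one fun a ha => (hB ha).2)
  · have hsum : ∀ a ∈ (σ : Set (Fin q → ℕ)), ∑ j, a j = r := fun a ha => (hG ha).1
    exact mem_of_exists_le_of_forall_sum_eq hsum hc
      (h.exists_le_of_forall_sub_one_le_apply hsum (fun a ha => (hG ha).2) hc)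

theorem extremal_dvd_lcm_iff_mem (q : ℕ) (hq : 3 ≤ q)
    (σ : Finset (Fin q → ℕ)) (hσ : σ ∈ LFaces 2 q) (hne : σ.Nonempty)
    (c : Fin q → ℕ) (hc : ∑ i, c i = 2) :
    (epow q c ≤ fun A => σ.sup fun a => epow q a A) ↔ c ∈ σ := by
  obtain ⟨i, hface⟩ := hσ
  exact extremal_dvd_lcm_iff_mem_general 2 q σ
    (hface.imp (fun hF => hF.trans_eq (Fset_two q i)) fun hG => ⟨i, hG⟩) hne c hc
end
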